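/- arXiv:1106.2264 — 5 statements merged into one kernel-verified Lean document; each statement's English description precedes it below -/
import Mathlib

section
/- If K ⊂ R^m is a convex body whose center of mass (barycenter) is at the origin, then vol((−K) ∩ K) ≥ 2^{−m}·vol(K). -/
open MeasureTheory
open scoped ENNReal

namespace VS

open scoped Pointwise in
lemma bm1_compact {a b : ℝ} (ha : 0 < a) (hb : 0 < b) {A B C : Set ℝ}
    (hA : IsCompact A) (hB : IsCompact B) (hAn : A.Nonempty) (hBn : B.Nonempty)
    (h : ∀ x ∈ A, ∀ y ∈ B, a * x + b * y ∈ C) :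
    ENNReal.ofReal a * volume A + ENNReal.ofReal b * volume B ≤ volume C := by
  set s := sSup A with hs
  set i := sInf B with hi
  have hsA : s ∈ A := hA.sSup_mem hAn
  have hiB : i ∈ B := hB.sInf_mem hBn
  set P : Set ℝ := (fun x => a * x + b * i) '' A with hP
  set Q : Set ℝ := (fun y => a * s + b * y) '' B with hQ
  have hPC : P ⊆ C := by
    rintro _ ⟨x, hx, rfl⟩; exact h x hx i hiB
  have hQC : Q ⊆ C := by
    rintro _ ⟨x, hx, rfl⟩; exact h s hsA x hx
  have hPv : volume P = ENNReal.ofReal a * volume A := by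
    have : P = (fun x => x + b * i) '' (a • A) := by
      rw [hP, ← Set.image_smul, Set.image_image]; simp
    rw [this, Set.image_add_right, measure_preimage_add_right, Measure.addHaar_smul]
    simp [abs_of_pos ha]
  have hQv : volume Q = ENNReal.ofReal b * volume B := by
    have : Q = (fun x => a * s + x) '' (b • B) := by
      rw [hQ, ← Set.image_smul, Set.image_image]; simp
    rw [this, Set.image_add_left, measure_preimage_add, Measure.addHaar_smul]
    simp [abs_of_pos hb]
  have hQc : IsCompact Q := hB.image (by fun_prop)
  have hd : AEDisjoint volume P Q := by
    refine measure_mono_null (t := {a * s + b * i}) ?_ (by simp)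
    rintro z ⟨⟨x, hx, rfl⟩, ⟨y, hy, hxy⟩⟩
    have h1 : x ≤ s := le_csSup hA.bddAbove hx
    have h2 : i ≤ y := csInf_le hB.bddBelow hy
    simp only at hxy ⊢
    have := mul_le_mul_of_nonneg_left h1 ha.le
    have := mul_le_mul_of_nonneg_left h2 hb.le
    simp only [Set.mem_singleton_iff]
    linarith
  rw [← hPv, ← hQv, ← measure_union₀ hQc.measurableSet.nullMeasurableSet hd]
  exact measure_mono (Set.union_subset hPC hQC)

lemma exists_compact_ne {A : Set ℝ} (hA : MeasurableSet A) (hAn : A.Nonempty) {r : ℝ≥0∞}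
    (hr : r < volume A ∨ r = 0) : ∃ K ⊆ A, IsCompact K ∧ K.Nonempty ∧ r ≤ volume K := by
  rcases hr with hr | rfl
  · obtain ⟨K, hKA, hK, h⟩ := hA.exists_lt_isCompact hr
    refine ⟨K, hKA, hK, ?_, h.le⟩
    by_contra hne
    rw [Set.not_nonempty_iff_eq_empty] at hne
    simp [hne] at h
  · obtain ⟨x, hx⟩ := hAn
    exact ⟨{x}, by simpa using hx, isCompact_singleton, by simp, by simp⟩

lemma sup_aux {v : ℝ≥0∞} : v = ⨆ r : {r : ℝ≥0∞ // r < v ∨ r = 0}, (r : ℝ≥0∞) := by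
  apply le_antisymm
  · refine le_of_forall_lt fun c hc => ?_
    obtain ⟨d, hd, hd'⟩ := exists_between hc
    exact hd.trans_le (le_iSup (fun r : {r : ℝ≥0∞ // r < v ∨ r = 0} => (r : ℝ≥0∞)) ⟨d, Or.inl hd'⟩)
  · refine iSup_le ?_
    rintro ⟨r, hr | rfl⟩
    · exact hr.le
    · simp

lemma bm1 {a b : ℝ} (ha : 0 < a) (hb : 0 < b) {A B C : Set ℝ}
    (hA : MeasurableSet A) (hB : MeasurableSet B) (hAn : A.Nonempty) (hBn : B.Nonempty)
    (h : ∀ x ∈ A, ∀ y ∈ B, a * x + b * y ∈ C) :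
    ENNReal.ofReal a * volume A + ENNReal.ofReal b * volume B ≤ volume C := by
  have (v : ℝ≥0∞) : Nonempty {r : ℝ≥0∞ // r < v ∨ r = 0} := ⟨⟨0, Or.inr rfl⟩⟩
  rw [sup_aux (v := volume A), sup_aux (v := volume B), ENNReal.mul_iSup, ENNReal.mul_iSup]
  refine ENNReal.iSup_add_iSup_le ?_
  rintro ⟨r, hr⟩ ⟨q, hq⟩
  obtain ⟨K, hKA, hK, hKn, hrK⟩ := exists_compact_ne hA hAn hr
  obtain ⟨L, hLB, hL, hLn, hqL⟩ := exists_compact_ne hB hBn hq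
  refine le_trans ?_ (bm1_compact ha hb hK hL hKn hLn fun x hx y hy => h x (hKA hx) y (hLB hy))
  gcongr

lemma layer {α : Type*} [MeasurableSpace α] (μ : Measure α) {f : α → ℝ≥0∞} (hf : Measurable f)
    (h1 : ∀ x, f x ≤ 1) :
    ∫⁻ x, f x ∂μ = ∫⁻ t in Set.Ioi (0 : ℝ), μ {x | ENNReal.ofReal t < f x} := by
  have hne : ∀ x, f x ≠ ∞ := fun x => ((h1 x).trans_lt ENNReal.one_lt_top).ne
  have := lintegral_eq_lintegral_meas_lt μ (f := fun x => (f x).toReal)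
    (Filter.Eventually.of_forall fun x => ENNReal.toReal_nonneg) hf.ennreal_toReal.aemeasurable
  simp only [ENNReal.ofReal_toReal (hne _)] at this
  rw [this]
  refine setLIntegral_congr_fun measurableSet_Ioi fun t ht => ?_
  congr 1
  ext x
  simp only [Set.mem_ofPred_eq]
  rw [ENNReal.ofReal_lt_iff_lt_toReal (le_of_lt ht) (hne x)]

lemma meas_level (f : ℝ → ℝ≥0∞) :
    Measurable fun t : ℝ => volume {x | ENNReal.ofReal t < f x} := by
  apply Antitone.measurable
  intro s t hst
  refine measure_mono fun x hx => ?_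
  exact (ENNReal.ofReal_le_ofReal hst).trans_lt hx

lemma pl1_norm {a b : ℝ} (ha : 0 < a) (hb : 0 < b) (hab : a + b = 1) {f g h : ℝ → ℝ≥0∞}
    (hf : Measurable f) (hg : Measurable g) (hh : Measurable h)
    (hf1 : ⨆ x, f x = 1) (hg1 : ⨆ x, g x = 1)
    (H : ∀ x y, f x ^ a * g y ^ b ≤ h (a * x + b * y)) :
    ENNReal.ofReal a * (∫⁻ x, f x) + ENNReal.ofReal b * (∫⁻ x, g x) ≤ ∫⁻ x, h x := by
  have f1 : ∀ x, f x ≤ 1 := fun x => hf1 ▸ le_iSup f x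
  have g1 : ∀ x, g x ≤ 1 := fun x => hg1 ▸ le_iSup g x
  have hm : Measurable fun x => min (h x) 1 := hh.min measurable_const
  calc _ ≤ ∫⁻ x, min (h x) 1 := ?_
    _ ≤ _ := lintegral_mono fun x => min_le_left _ _
  rw [layer _ hf f1, layer _ hg g1, layer _ hm (fun x => min_le_right _ _),
    ← lintegral_const_mul _ (meas_level f), ← lintegral_const_mul _ (meas_level g),
    ← lintegral_add_left ((meas_level f).const_mul _)]
  refine setLIntegral_mono (meas_level _) fun t ht => ?_
  rcases lt_or_ge t 1 with ht1 | ht1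
  · have ht1' : ENNReal.ofReal t < 1 := by simpa using ht1
    have ht0 : ENNReal.ofReal t ≠ 0 := by simpa using ht
    apply bm1 ha hb (measurableSet_lt measurable_const hf) (measurableSet_lt measurable_const hg)
    · exact lt_iSup_iff.1 (hf1 ▸ ht1')
    · exact lt_iSup_iff.1 (hg1 ▸ ht1')
    · intro x hx y hy
      simp only [Set.mem_ofPred_eq] at hx hy ⊢
      refine lt_min (lt_of_lt_of_le ?_ (H x y)) ht1'
      calc ENNReal.ofReal t = ENNReal.ofReal t ^ a * ENNReal.ofReal t ^ b := by
            rw [← ENNReal.rpow_add _ _ ht0 ENNReal.ofReal_ne_top, hab, ENNReal.rpow_one]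
        _ < f x ^ a * g y ^ b :=
            ENNReal.mul_lt_mul (ENNReal.rpow_lt_rpow hx ha) (ENNReal.rpow_lt_rpow hy hb)
  · have hz : ∀ u : ℝ → ℝ≥0∞, (∀ x, u x ≤ 1) → {x | ENNReal.ofReal t < u x} = ∅ := by
      intro u hu
      ext x
      simp only [Set.mem_ofPred_eq, Set.mem_empty_iff_false, iff_false, not_lt]
      exact (hu x).trans (by simpa using ht1)
    simp [hz f f1, hz g g1]

lemma amgm {a b : ℝ} (ha : 0 < a) (hb : 0 < b) (hab : a + b = 1) (x y : ℝ≥0∞) :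
    x ^ a * y ^ b ≤ ENNReal.ofReal a * x + ENNReal.ofReal b * y := by
  have ha' : ENNReal.ofReal a ≠ 0 := by simpa using ha
  have hb' : ENNReal.ofReal b ≠ 0 := by simpa using hb
  induction x with
  | top => simp [ENNReal.mul_top ha']
  | coe x =>
    induction y with
    | top => simp [ENNReal.mul_top hb']
    | coe y =>
      lift a to NNReal using ha.le
      lift b to NNReal using hb.le
      have := NNReal.geom_mean_le_arith_mean2_weighted a b x y (by exact_mod_cast hab)
      rw [← ENNReal.coe_rpow_of_nonneg _ ha.le, ← ENNReal.coe_rpow_of_nonneg _ hb.le,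
        ENNReal.ofReal_coe_nnreal, ENNReal.ofReal_coe_nnreal]
      exact_mod_cast this

lemma pl1_bdd {a b : ℝ} (ha : 0 < a) (hb : 0 < b) (hab : a + b = 1) {f g h : ℝ → ℝ≥0∞}
    (hf : Measurable f) (hg : Measurable g) (hh : Measurable h)
    (hf1 : ⨆ x, f x ≠ ∞) (hg1 : ⨆ x, g x ≠ ∞)
    (H : ∀ x y, f x ^ a * g y ^ b ≤ h (a * x + b * y)) :
    (∫⁻ x, f x) ^ a * (∫⁻ x, g x) ^ b ≤ ∫⁻ x, h x := by
  set S := ⨆ x, f x with hS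
  set T := ⨆ x, g x with hT
  by_cases hS0 : S = 0
  · have : ∀ x, f x = 0 := fun x => le_antisymm (hS0 ▸ le_iSup f x) zero_le
    simp [this, ha]
  by_cases hT0 : T = 0
  · have : ∀ x, g x = 0 := fun x => le_antisymm (hT0 ▸ le_iSup g x) zero_le
    simp [this, hb]
  have cS : S⁻¹ * S = 1 := ENNReal.inv_mul_cancel hS0 hf1
  have cT : T⁻¹ * T = 1 := ENNReal.inv_mul_cancel hT0 hg1
  have key := pl1_norm ha hb hab (f := fun x => S⁻¹ * f x) (g := fun x => T⁻¹ * g x)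
    (h := fun x => ((S⁻¹) ^ a * (T⁻¹) ^ b) * h x) (hf.const_mul _) (hg.const_mul _)
    (hh.const_mul _) (by rw [← ENNReal.mul_iSup, ← hS, cS]) (by rw [← ENNReal.mul_iSup, ← hT, cT])
    (by
      intro x y
      rw [ENNReal.mul_rpow_of_nonneg _ _ ha.le, ENNReal.mul_rpow_of_nonneg _ _ hb.le, mul_mul_mul_comm]
      gcongr
      exact H x y)
  have key2 := (amgm ha hb hab _ _).trans key
  rw [lintegral_const_mul _ hf, lintegral_const_mul _ hg, lintegral_const_mul _ hh,
    ENNReal.mul_rpow_of_nonneg _ _ ha.le, ENNReal.mul_rpow_of_nonneg _ _ hb.le, mul_mul_mul_comm]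
    at key2
  clear_value S T
  clear key hS hT
  have hST : S⁻¹ ^ a * T⁻¹ ^ b ≠ 0 := by
    apply mul_ne_zero <;> simp [ENNReal.rpow_eq_zero_iff, *, ha.not_gt, hb.not_gt]
  have hST' : S⁻¹ ^ a * T⁻¹ ^ b ≠ ∞ := by
    apply ENNReal.mul_ne_top <;> apply ENNReal.rpow_ne_top_of_nonneg <;> simp [*, ha.le, hb.le]
  exact (ENNReal.mul_le_mul_iff_right hST hST').1 key2

lemma trunc_tendsto {f : ℝ → ℝ≥0∞} (hf : Measurable f) :
    Filter.Tendsto (fun n : ℕ => ∫⁻ x, min (f x) n) Filter.atTop (nhds (∫⁻ x, f x)) := by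
  refine lintegral_tendsto_of_tendsto_of_monotone (fun n => (hf.min measurable_const).aemeasurable)
    (Filter.Eventually.of_forall fun x => ?_) (Filter.Eventually.of_forall fun x => ?_)
  · intro m n hmn
    exact min_le_min_left _ (by exact_mod_cast hmn)
  · have : Filter.Tendsto (fun n : ℕ => min (f x) (n : ℝ≥0∞)) Filter.atTop (nhds (min (f x) ⊤)) :=
      tendsto_const_nhds.min ENNReal.tendsto_nat_nhds_top
    simpa using this

lemma pl1 {a b : ℝ} (ha : 0 < a) (hb : 0 < b) (hab : a + b = 1) {f g h : ℝ → ℝ≥0∞}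
    (hf : Measurable f) (hg : Measurable g) (hh : Measurable h)
    (H : ∀ x y, f x ^ a * g y ^ b ≤ h (a * x + b * y)) :
    (∫⁻ x, f x) ^ a * (∫⁻ x, g x) ^ b ≤ ∫⁻ x, h x := by
  by_cases hf0 : ∫⁻ x, f x = 0
  · simp [hf0, ha]
  by_cases hg0 : ∫⁻ x, g x = 0
  · simp [hg0, hb]
  have t1 := (ENNReal.continuous_rpow_const (y := a)).tendsto _ |>.comp (trunc_tendsto hf)
  have t2 := (ENNReal.continuous_rpow_const (y := b)).tendsto _ |>.comp (trunc_tendsto hg)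
  have t3 := ENNReal.Tendsto.mul t1 (Or.inl (by simp [ENNReal.rpow_eq_zero_iff, *, ha.not_gt])) t2
    (Or.inl (by simp [ENNReal.rpow_eq_zero_iff, *, hb.not_gt]))
  refine le_of_tendsto' t3 fun n => ?_
  have bd : ∀ u : ℝ → ℝ≥0∞, ⨆ x, min (u x) (n : ℝ≥0∞) ≠ ∞ := fun u =>
    ((iSup_le fun x => min_le_right _ _).trans_lt (ENNReal.natCast_lt_top n)).ne
  refine pl1_bdd ha hb hab (hf.min measurable_const) (hg.min measurable_const) hh (bd f) (bd g) ?_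
  intro x y
  refine le_trans ?_ (H x y)
  gcongr
  · exact min_le_left _ _
  · exact min_le_left _ _

lemma lint_succ {n : ℕ} {f : (Fin (n + 1) → ℝ) → ℝ≥0∞} (hf : Measurable f) :
    ∫⁻ x, f x = ∫⁻ t : ℝ, ∫⁻ y : Fin n → ℝ, f (Fin.cons t y) := by
  have e := volume_preserving_piFinSuccAbove (fun _ : Fin (n + 1) => ℝ) 0
  have h1 := e.symm.lintegral_comp hf
  rw [← h1]
  have hm : Measurable fun p => f ((MeasurableEquiv.piFinSuccAbove (fun _ : Fin (n + 1) => ℝ) 0).symm p) :=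
    hf.comp (MeasurableEquiv.measurable _)
  rw [Measure.volume_eq_prod, lintegral_prod _ hm.aemeasurable]
  simp [MeasurableEquiv.piFinSuccAbove, Fin.insertNthEquiv]

lemma meas_cons {n : ℕ} {f : (Fin (n + 1) → ℝ) → ℝ≥0∞} (hf : Measurable f) :
    Measurable fun p : ℝ × (Fin n → ℝ) => f (Fin.cons p.1 p.2) := by
  apply hf.comp
  rw [measurable_pi_iff]
  intro i
  refine Fin.cases ?_ (fun j => ?_) i
  · simpa using measurable_fst
  · simp only [Fin.cons_succ]
    fun_prop

theorem pl {a b : ℝ} (ha : 0 < a) (hb : 0 < b) (hab : a + b = 1) (n : ℕ) :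
    ∀ {f g h : (Fin n → ℝ) → ℝ≥0∞}
    (_ : Measurable f) (_ : Measurable g) (_ : Measurable h)
    (_ : ∀ x y, f x ^ a * g y ^ b ≤ h (a • x + b • y)),
    (∫⁻ x, f x) ^ a * (∫⁻ x, g x) ^ b ≤ ∫⁻ x, h x := by
  induction n with
  | zero =>
    intro f g h hf hg hh H
    have : (volume : Measure (Fin 0 → ℝ)) Set.univ = 1 := by
      rw [volume_pi, Measure.pi_univ]; simp
    have e : ∀ u : (Fin 0 → ℝ) → ℝ≥0∞, ∫⁻ x, u x = u 0 := by
      intro u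
      rw [lintegral_unique, this, mul_one]
      congr 1
      exact Subsingleton.elim _ _
    rw [e, e, e]
    simpa using H 0 0
  | succ n ih =>
    intro f g h hf hg hh H
    rw [lint_succ hf, lint_succ hg, lint_succ hh]
    refine pl1 ha hb hab (meas_cons hf).lintegral_prod_right' (meas_cons hg).lintegral_prod_right'
      (meas_cons hh).lintegral_prod_right' fun s t => ?_
    refine ih ((meas_cons hf).comp measurable_prodMk_left) ((meas_cons hg).comp measurable_prodMk_left)
      ((meas_cons hh).comp measurable_prodMk_left) fun x y => ?_
    refine (H _ _).trans_eq ?_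
    congr 1
    ext i
    refine Fin.cases ?_ (fun j => ?_) i <;> simp

theorem bm {a b : ℝ} (ha : 0 < a) (hb : 0 < b) (hab : a + b = 1) {n : ℕ}
    {A B C : Set (Fin n → ℝ)} (hA : MeasurableSet A) (hB : MeasurableSet B) (hC : MeasurableSet C)
    (H : ∀ x ∈ A, ∀ y ∈ B, a • x + b • y ∈ C) :
    volume A ^ a * volume B ^ b ≤ volume C := by
  have := pl ha hb hab n (f := A.indicator 1) (g := B.indicator 1) (h := C.indicator 1)
    (measurable_one.indicator hA) (measurable_one.indicator hB) (measurable_one.indicator hC) (by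
      intro x y
      by_cases hx : x ∈ A
      · by_cases hy : y ∈ B
        · simp [hx, hy, H x hx y hy]
        · simp [hy, hb]
      · simp [hx, ha])
  simpa [lintegral_indicator_one, *] using this
end VS
namespace VS
variable {m : ℕ} {K : Set (Fin m → ℝ)}

lemma zero_mem (hconv : Convex ℝ K) (hcomp : IsCompact K) (hint : (interior K).Nonempty)
    (hbary : ∫ x in K, x ∂volume = 0) : (0 : Fin m → ℝ) ∈ interior K := by
  by_contra h0
  obtain ⟨l, hl⟩ := geometric_hahn_banach_open_point hconv.interior isOpen_interior h0
  simp only [map_zero] at hl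
  have hint1 : IntegrableOn (fun x : Fin m → ℝ => x) K :=
    continuousOn_id.integrableOn_compact hcomp
  have h1 : ∫ x in K, l x = 0 := by
    rw [ContinuousLinearMap.integral_comp_comm l hint1, hbary, map_zero]
  have hae : (interior K : Set (Fin m → ℝ)) =ᵐ[volume] K := interior_ae_eq_of_null_frontier
    (hconv.addHaar_frontier volume)
  rw [← setIntegral_congr_set hae] at h1
  have hi : IntegrableOn (fun x => - l x) (interior K) :=
    ((l.continuous.continuousOn.integrableOn_compact hcomp).mono_set interior_subset).neg
  have h2 : ∫ x in interior K, - l x = 0 := by rw [integral_neg, h1, neg_zero]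
  have h3 : 0 < ∫ x in interior K, - l x := by
    rw [setIntegral_pos_iff_support_of_nonneg_ae _ hi]
    · refine (isOpen_interior.measure_pos volume hint).trans_le (measure_mono fun x hx => ⟨?_, hx⟩)
      simpa using (hl x hx).ne
    · filter_upwards [ae_restrict_mem isOpen_interior.measurableSet] with x hx
      simpa using (hl x hx).le
  linarith

/-- Volume of the section `K ∩ (2k - K)`. -/
noncomputable def F (K : Set (Fin m → ℝ)) (k : Fin m → ℝ) : ℝ≥0∞ :=
  volume (K ∩ {y | (2 : ℝ) • k - y ∈ K})

lemma meas_S (hK : MeasurableSet K) (k : Fin m → ℝ) :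
    MeasurableSet (K ∩ {y | (2 : ℝ) • k - y ∈ K}) := by
  apply hK.inter
  have : Measurable fun y : Fin m → ℝ => (2 : ℝ) • k - y := by fun_prop
  exact this hK

lemma meas_F (hK : MeasurableSet K) : Measurable (F K) := by
  have hs : MeasurableSet {p : (Fin m → ℝ) × (Fin m → ℝ) | p.2 ∈ K ∧ (2 : ℝ) • p.1 - p.2 ∈ K} := by
    apply MeasurableSet.inter
    · exact measurable_snd hK
    · have : Measurable fun p : (Fin m → ℝ) × (Fin m → ℝ) => (2 : ℝ) • p.1 - p.2 := by fun_prop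
      exact this hK
  exact measurable_measure_prodMk_left hs

lemma F_ne_top (hcomp : IsCompact K) (k : Fin m → ℝ) : F K k ≠ ∞ :=
  ((measure_mono Set.inter_subset_left).trans_lt hcomp.measure_lt_top).ne

lemma F_pos {k : Fin m → ℝ} (hk : k ∈ interior K) : 0 < F K k := by
  have ho : IsOpen (interior K ∩ {y | (2 : ℝ) • k - y ∈ interior K}) := by
    apply isOpen_interior.inter
    have : Continuous fun y : Fin m → ℝ => (2 : ℝ) • k - y := by fun_prop
    exact isOpen_interior.preimage this
  refine (ho.measure_pos volume ⟨k, hk, ?_⟩).trans_le (measure_mono ?_)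
  · have : (2 : ℝ) • k - k = k := by rw [two_smul]; simp
    show (2 : ℝ) • k - k ∈ interior K
    rwa [this]
  · rintro y ⟨hy, hy'⟩
    exact ⟨interior_subset hy, interior_subset (s := K) hy'⟩

lemma F_logconc (hconv : Convex ℝ K) (hK : MeasurableSet K) {a b : ℝ} (ha : 0 < a) (hb : 0 < b)
    (hab : a + b = 1) (x y : Fin m → ℝ) :
    F K x ^ a * F K y ^ b ≤ F K (a • x + b • y) := by
  refine bm ha hb hab (meas_S hK _) (meas_S hK _) (meas_S hK _) ?_
  rintro u ⟨hu, hu'⟩ v ⟨hv, hv'⟩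
  refine ⟨hconv hu hv ha.le hb.le hab, ?_⟩
  have := hconv hu' hv' ha.le hb.le hab
  show (2 : ℝ) • (a • x + b • y) - (a • u + b • v) ∈ K
  convert this using 1
  module

lemma G_conc (hconv : Convex ℝ K) (hcomp : IsCompact K) :
    ConcaveOn ℝ (interior K) fun k => Real.log (F K k).toReal := by
  rw [concaveOn_iff_forall_pos]
  refine ⟨hconv.interior, ?_⟩
  intro x hx y hy a b ha hb hab
  have h := F_logconc hconv hcomp.measurableSet ha hb hab x y
  have h' := ENNReal.toReal_mono (F_ne_top hcomp _) h
  rw [ENNReal.toReal_mul, ← ENNReal.toReal_rpow, ← ENNReal.toReal_rpow] at h'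
  have px : 0 < (F K x).toReal := ENNReal.toReal_pos (F_pos hx).ne' (F_ne_top hcomp _)
  have py : 0 < (F K y).toReal := ENNReal.toReal_pos (F_pos hy).ne' (F_ne_top hcomp _)
  have := Real.log_le_log (by positivity) h'
  rw [Real.log_mul (by positivity) (by positivity), Real.log_rpow px, Real.log_rpow py] at this
  simpa using this

lemma scale (y : Fin m → ℝ) {ψ : (Fin m → ℝ) → ℝ≥0∞} (hψ : Measurable ψ) :
    ∫⁻ z, ψ ((1 / 2 : ℝ) • (y + z)) = 2 ^ m * ∫⁻ k, ψ k := by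
  rw [lintegral_add_left_eq_self (fun z => ψ ((1 / 2 : ℝ) • z)) y]
  have h := Measure.map_addHaar_smul (volume : Measure (Fin m → ℝ)) (r := 1 / 2) (by norm_num)
  have h2 := lintegral_map (μ := volume) hψ (g := fun x : Fin m → ℝ => (1 / 2 : ℝ) • x) (by fun_prop)
  rw [← h2, h, lintegral_smul_measure]
  have : |((1 / 2 : ℝ) ^ Module.finrank ℝ (Fin m → ℝ))⁻¹| = 2 ^ m := by
    rw [abs_of_pos (by positivity)]; simp
  rw [this, ENNReal.ofReal_pow (by norm_num)]
  simp

lemma mid_mem (hconv : Convex ℝ K) {y z : Fin m → ℝ} (hy : y ∈ interior K) (hz : z ∈ interior K) :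
    (1 / 2 : ℝ) • (y + z) ∈ interior K := by
  rw [smul_add]
  exact hconv.interior hy hz (by norm_num) (by norm_num) (by norm_num)

lemma lint_bound (hconv : Convex ℝ K) (hcomp : IsCompact K) :
    ∫⁻ p in interior K ×ˢ interior K, (F K ((1 / 2 : ℝ) • (p.1 + p.2)))⁻¹ ≤ 2 ^ m * volume K := by
  have hK := hcomp.measurableSet
  have hU : MeasurableSet (interior K) := isOpen_interior.measurableSet
  set I : (Fin m → ℝ) → ℝ≥0∞ := K.indicator 1 with hI
  have hIm : Measurable I := measurable_one.indicator hK
  set Φ : (Fin m → ℝ) → ℝ≥0∞ := (interior K).indicator (fun k => (F K k)⁻¹) with hΦ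
  have hΦm : Measurable Φ := (meas_F hK).inv.indicator hU
  calc ∫⁻ p in interior K ×ˢ interior K, (F K ((1 / 2 : ℝ) • (p.1 + p.2)))⁻¹
      ≤ ∫⁻ p : (Fin m → ℝ) × (Fin m → ℝ), I p.1 * (I p.2 * Φ ((1 / 2 : ℝ) • (p.1 + p.2))) := by
        rw [← lintegral_indicator (hU.prod hU)]
        refine lintegral_mono fun p => ?_
        by_cases hp : p ∈ interior K ×ˢ interior K
        · rw [Set.indicator_of_mem hp]
          simp only [hI, hΦ, Set.indicator_of_mem (interior_subset hp.1),
            Set.indicator_of_mem (interior_subset hp.2),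
            Set.indicator_of_mem (mid_mem hconv hp.1 hp.2), Pi.one_apply, one_mul, le_refl]
        · rw [Set.indicator_of_notMem hp]; exact zero_le
    _ = ∫⁻ y, ∫⁻ z, I y * (I z * Φ ((1 / 2 : ℝ) • (y + z))) := by
        rw [Measure.volume_eq_prod, lintegral_prod]
        apply Measurable.aemeasurable
        fun_prop
    _ = ∫⁻ y, I y * (2 ^ m * ∫⁻ k, I ((2 : ℝ) • k - y) * Φ k) := by
        congr 1 with y
        rw [lintegral_const_mul _ (by fun_prop)]
        rw [← scale y (ψ := fun k => I ((2 : ℝ) • k - y) * Φ k) (by fun_prop)]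
        congr 2 with z
        congr 2
        module
    _ = ∫⁻ y, ∫⁻ k, 2 ^ m * (Φ k * (I y * I ((2 : ℝ) • k - y))) := by
        congr 1 with y
        rw [← lintegral_const_mul _ (by fun_prop), ← lintegral_const_mul _ (by fun_prop)]
        congr 1 with k
        ring
    _ = ∫⁻ k, ∫⁻ y, 2 ^ m * (Φ k * (I y * I ((2 : ℝ) • k - y))) := by
        apply lintegral_lintegral_swap
        apply Measurable.aemeasurable
        unfold Function.uncurry
        fun_prop
    _ = ∫⁻ k, 2 ^ m * (Φ k * F K k) := by
        congr 1 with k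
        rw [lintegral_const_mul _ (by fun_prop), lintegral_const_mul _ (by fun_prop)]
        congr 2
        rw [F, ← lintegral_indicator_one (meas_S hK k)]
        congr 1 with y
        by_cases h1 : y ∈ K <;> by_cases h2 : (2 : ℝ) • k - y ∈ K <;> simp [hI, h1, h2]
    _ ≤ ∫⁻ k, 2 ^ m * I k := by
        refine lintegral_mono fun k => ?_
        gcongr
        by_cases hk : k ∈ interior K
        · simp only [hΦ, hI, Set.indicator_of_mem hk, Set.indicator_of_mem (interior_subset hk)]
          simp
        · simp [hΦ, hk]
    _ = 2 ^ m * volume K := by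
        rw [lintegral_const_mul _ hIm, lintegral_indicator_one hK]

end VS

theorem volume_symmetrization (m : ℕ) (K : Set (Fin m → ℝ))
    (hconv : Convex ℝ K) (hcomp : IsCompact K) (hint : (interior K).Nonempty)
    (hbary : ∫ x in K, x ∂volume = 0) :
    ((2 : ℝ≥0∞))⁻¹ ^ m * volume K ≤ volume ((-K) ∩ K) := by
  have h0 := VS.zero_mem hconv hcomp hint hbary
  have hF0 : volume ((-K) ∩ K) = VS.F K 0 := by
    rw [VS.F, Set.inter_comm]
    congr 2
    ext y
    simp
  rw [hF0]
  set U := interior K with hU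
  have hUm : MeasurableSet U := isOpen_interior.measurableSet
  have hae : U =ᵐ[volume] K := interior_ae_eq_of_null_frontier (hconv.addHaar_frontier volume)
  have hVtop : volume K ≠ ∞ := hcomp.measure_lt_top.ne
  have hUV : volume U = volume K := measure_congr hae
  set V := (volume K).toReal with hV
  have hVpos : 0 < V :=
    ENNReal.toReal_pos (hUV ▸ (isOpen_interior.measure_pos volume hint).ne') hVtop
  set G : (Fin m → ℝ) → ℝ := fun k => Real.log (VS.F K k).toReal with hG
  have hGc : ConcaveOn ℝ U G := VS.G_conc hconv hcomp
  have hGcont : ContinuousOn G U := hGc.continuousOn isOpen_interior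
  set s : Set (Fin m → ℝ) := (fun x => (1 / 2 : ℝ) • x) '' K with hs
  have hsc : IsCompact s := hcomp.image (by fun_prop)
  have hsU : s ⊆ U := by
    rintro _ ⟨x, hx, rfl⟩
    have := hconv.combo_interior_self_mem_interior h0 hx (a := 1 / 2) (b := 1 / 2)
      (by norm_num) (by norm_num) (by norm_num)
    simpa using this
  have hsconv : Convex ℝ s := by
    have := hconv.smul (1 / 2 : ℝ)
    rwa [← Set.image_smul] at this
  set t : Set ((Fin m → ℝ) × (Fin m → ℝ)) := U ×ˢ U with ht
  have htm : MeasurableSet t := hUm.prod hUm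
  have hvt : volume t = volume K * volume K := by
    rw [ht, Measure.volume_eq_prod, Measure.prod_prod, hUV]
  have hvtr : volume.real t = V * V := by
    rw [Measure.real, hvt, ENNReal.toReal_mul]
  have hvt0 : volume t ≠ 0 := by
    intro h
    rw [Measure.real, h] at hvtr
    simp at hvtr
    exact hVpos.ne' hvtr
  have hvtop : volume t ≠ ∞ := by rw [hvt]; exact ENNReal.mul_ne_top hVtop hVtop
  set f : (Fin m → ℝ) × (Fin m → ℝ) → (Fin m → ℝ) := fun p => (1 / 4 : ℝ) • (p.1 + p.2) with hf
  have htKK : t ⊆ K ×ˢ K := Set.prod_mono interior_subset interior_subset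
  have hfs : ∀ p ∈ K ×ˢ K, f p ∈ s := by
    rintro ⟨y, z⟩ ⟨hy, hz⟩
    refine ⟨(1 / 2 : ℝ) • y + (1 / 2 : ℝ) • z,
      hconv hy hz (by norm_num) (by norm_num) (by norm_num), ?_⟩
    simp only [hf]
    module
  have hfc : Continuous f := by fun_prop
  have hfi : IntegrableOn f t :=
    (hfc.continuousOn.integrableOn_compact (hcomp.prod hcomp)).mono_set htKK
  have hgi : IntegrableOn (G ∘ f) t := by
    refine IntegrableOn.mono_set (ContinuousOn.integrableOn_compact (hcomp.prod hcomp) ?_) htKK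
    exact (hGcont.mono hsU).comp hfc.continuousOn hfs
  have hj := (hGc.subset hsU hsconv).le_map_set_average (hGcont.mono hsU) hsc.isClosed hvt0 hvtop
    (by filter_upwards [ae_restrict_mem htm] with p hp using hfs p (htKK hp)) hfi hgi
  have hid : IntegrableOn (fun x : Fin m → ℝ => x) U :=
    (continuousOn_id.integrableOn_compact hcomp).mono_set interior_subset
  have hUb : ∫ x in U, x = 0 := by rw [setIntegral_congr_set hae, hbary]
  have hf0 : ∫ p in t, f p = 0 := by
    have hUfin : volume U ≠ ∞ := by rw [hUV]; exact hVtop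
    rw [Measure.volume_eq_prod, setIntegral_prod _ hfi]
    have : ∀ y : Fin m → ℝ, ∫ z in U, f (y, z) = (1 / 4 : ℝ) • (volume.real U • y) := by
      intro y
      simp only [hf]
      rw [integral_smul, integral_add (integrableOn_const (C := y) hUfin).integrable hid, hUb]
      simp
    simp only [this]
    rw [integral_smul, integral_smul, hUb]
    simp
  rw [setAverage_eq, setAverage_eq, hf0, smul_zero, hvtr] at hj
  set c : ℝ := V / 2 ^ m with hc
  have hcpos : 0 < c := by positivity
  set H : (Fin m → ℝ) × (Fin m → ℝ) → ℝ :=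
    fun p => ((VS.F K ((1 / 2 : ℝ) • (p.1 + p.2))).toReal)⁻¹ with hH
  have hHm : Measurable H := by
    have := VS.meas_F hcomp.measurableSet
    have h2 : Measurable fun p : (Fin m → ℝ) × (Fin m → ℝ) => VS.F K ((1 / 2 : ℝ) • (p.1 + p.2)) :=
      this.comp (by fun_prop)
    exact h2.ennreal_toReal.inv
  have hHl : ∫⁻ p in t, ENNReal.ofReal (H p) ≤ 2 ^ m * volume K := by
    refine le_trans (setLIntegral_mono' htm fun p hp => ?_) (VS.lint_bound hconv hcomp)
    have hp' := VS.mid_mem hconv hp.1 hp.2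
    simp only [hH]
    rw [← ENNReal.toReal_inv]
    exact ENNReal.ofReal_toReal_le
  have hbt : 2 ^ m * volume K ≠ ∞ := ENNReal.mul_ne_top (by simp) hVtop
  have hH0 : ∀ p, 0 ≤ H p := fun p => by simp only [hH]; positivity
  have hHi : IntegrableOn H t := by
    refine ⟨hHm.aestronglyMeasurable, ?_⟩
    rw [hasFiniteIntegral_iff_ofReal (Filter.Eventually.of_forall hH0)]
    exact hHl.trans_lt hbt.lt_top
  have hHb : ∫ p in t, H p ≤ 2 ^ m * V := by
    rw [integral_eq_lintegral_of_nonneg_ae (Filter.Eventually.of_forall hH0)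
      hHm.aestronglyMeasurable]
    refine (ENNReal.toReal_mono hbt hHl).trans_eq ?_
    simp [hV]
  have hlow : ∀ p ∈ t, (1 / 2 * (Real.log c + 1) + 1 / 2 * G 0) - c / 2 * H p ≤ G (f p) := by
    intro p hp
    have hp' := VS.mid_mem hconv hp.1 hp.2
    have h1 := hGc.2 hp' h0 (show (0 : ℝ) ≤ 1 / 2 by norm_num) (show (0 : ℝ) ≤ 1 / 2 by norm_num)
      (by norm_num)
    have h2 : (1 / 2 : ℝ) • (1 / 2 : ℝ) • (p.1 + p.2) + (1 / 2 : ℝ) • (0 : Fin m → ℝ) = f p := by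
      simp only [hf]; module
    rw [h2] at h1
    have hpos : 0 < (VS.F K ((1 / 2 : ℝ) • (p.1 + p.2))).toReal :=
      ENNReal.toReal_pos (VS.F_pos hp').ne' (VS.F_ne_top hcomp _)
    have h3 := Real.one_sub_inv_le_log_of_pos (div_pos hpos hcpos)
    rw [Real.log_div hpos.ne' hcpos.ne', inv_div, div_eq_mul_inv] at h3
    simp only [smul_eq_mul] at h1
    have h4 : G ((1 / 2 : ℝ) • (p.1 + p.2)) ≥ Real.log c + 1 - c * H p := by
      simp only [hG, hH]; linarith
    linarith
  have hci : IntegrableOn (fun _ : (Fin m → ℝ) × (Fin m → ℝ) =>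
    (1 / 2 * (Real.log c + 1) + 1 / 2 * G 0)) t := integrableOn_const hvtop
  have hmono := setIntegral_mono_on (hci.sub (hHi.const_mul (c / 2))) hgi htm hlow
  have hL : ∫ p in t, ((1 / 2 * (Real.log c + 1) + 1 / 2 * G 0) - c / 2 * H p) =
      V * V * (1 / 2 * (Real.log c + 1) + 1 / 2 * G 0) - c / 2 * ∫ p in t, H p := by
    rw [integral_sub hci (hHi.const_mul _), integral_const_mul, setIntegral_const, hvtr, smul_eq_mul]
  have hVV : 0 < V * V := by positivity
  have hj2 : ∫ p in t, G (f p) ≤ V * V * G 0 := by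
    rw [smul_eq_mul, inv_mul_le_iff₀ hVV] at hj
    exact hj
  have hm2 : V * V * (1 / 2 * (Real.log c + 1) + 1 / 2 * G 0) - c / 2 * ∫ p in t, H p
      ≤ V * V * G 0 := by
    rw [← hL]; exact hmono.trans hj2
  have hcH : c / 2 * ∫ p in t, H p ≤ V * V / 2 := by
    calc c / 2 * ∫ p in t, H p ≤ c / 2 * (2 ^ m * V) := by gcongr
      _ = V * V / 2 := by rw [hc]; field_simp
  have hlog : Real.log c ≤ G 0 := by
    have : V * V * Real.log c ≤ V * V * G 0 := by linarith
    exact le_of_mul_le_mul_left this hVV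
  have hF0pos : 0 < (VS.F K 0).toReal :=
    ENNReal.toReal_pos (VS.F_pos h0).ne' (VS.F_ne_top hcomp _)
  have hfin : c ≤ (VS.F K 0).toReal := (Real.log_le_log_iff hcpos hF0pos).1 hlog
  rw [← ENNReal.ofReal_le_iff_le_toReal (VS.F_ne_top hcomp _)] at hfin
  refine le_trans (le_of_eq ?_) hfin
  rw [hc, div_eq_inv_mul, ENNReal.ofReal_mul (by positivity), ENNReal.ofReal_toReal hVtop,
    ENNReal.ofReal_inv_of_pos (by positivity), ENNReal.ofReal_pow (by norm_num), ENNReal.inv_pow]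
  simp
end

section
/- Let Z be a bounded real random variable with law μ_Z whose support equals a bounded interval [a,b] with a < b, and let (Y_n) be a sequence of bounded real random variables. Then the following are equivalent: (1) d_∞(Y_n, Z) → 0; (2) Y_n converges to Z in distribution (weakly), ess sup Y_n → b, and ess inf Y_n → a. -/
open MeasureTheory Filter Topology
open scoped ENNReal BigOperators

noncomputable section

/-- The `∞`-Wasserstein distance between two (probability) measures on `ℝ`: the infimum
over all couplings `π` (measures on `ℝ × ℝ` with the prescribed marginals) of the
essential supremum of `|x − y|`; this coincides with `inf ‖X₁ − X₂‖_{L^∞}` over all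
pairs of random variables with the given laws defined on a common probability space. -/
def wassersteinInf (μ₁ μ₂ : Measure ℝ) : ℝ≥0∞ :=
  ⨅ (π : Measure (ℝ × ℝ)) (_ : π.map Prod.fst = μ₁ ∧ π.map Prod.snd = μ₂),
    essSup (fun p : ℝ × ℝ => ENNReal.ofReal |p.1 - p.2|) π

/-- The (topological) support of a measure on `ℝ`: the set of points all of whose
neighborhoods have positive measure. -/
def measureSupport (μ : Measure ℝ) : Set ℝ := {x | ∀ U ∈ nhds x, μ U ≠ 0}

end

open ProbabilityTheory in
/-- Quantile function. -/
noncomputable def quant (μ : Measure ℝ) (u : ℝ) : ℝ := sInf {t | u ≤ cdf μ t}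

open ProbabilityTheory in
lemma quant_le_iff (μ : Measure ℝ) {u : ℝ} (h0 : 0 < u) (h1 : u < 1) (t : ℝ) :
    quant μ u ≤ t ↔ u ≤ cdf μ t := by
  have hbdd : BddBelow {t | u ≤ cdf μ t} := by
    obtain ⟨s, hs⟩ := ((tendsto_cdf_atBot μ).eventually_lt_const h0).exists
    refine ⟨s, fun x hx => ?_⟩
    by_contra hlt
    have := monotone_cdf μ (not_le.mp hlt).le
    have hx' : u ≤ cdf μ x := hx
    linarith
  have hne : {t | u ≤ cdf μ t}.Nonempty := by
    obtain ⟨s, hs⟩ := ((tendsto_cdf_atTop μ).eventually_const_lt h1).exists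
    exact ⟨s, hs.le⟩
  constructor
  · intro h
    refine le_trans ?_ (monotone_cdf μ h)
    have hc : Tendsto (cdf μ) (𝓝[>] (quant μ u)) (𝓝 (cdf μ (quant μ u))) :=
      ((cdf μ).right_continuous (quant μ u)).mono_left (nhdsWithin_mono _ Set.Ioi_subset_Ici_self)
    refine ge_of_tendsto hc ?_
    filter_upwards [self_mem_nhdsWithin] with s hs
    obtain ⟨r, hr, hrs⟩ := exists_lt_of_csInf_lt hne hs
    exact le_trans hr (monotone_cdf μ hrs.le)
  · intro h
    exact csInf_le hbdd h

lemma quant_monotoneOn (μ : Measure ℝ) : MonotoneOn (quant μ) (Set.Ioo 0 1) := by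
  intro u hu v hv huv
  rw [quant_le_iff μ hu.1 hu.2]
  exact huv.trans ((quant_le_iff μ hv.1 hv.2 _).1 le_rfl)

lemma quant_aemeasurable (μ : Measure ℝ) :
    AEMeasurable (quant μ) (volume.restrict (Set.Ioo (0:ℝ) 1)) :=
  aemeasurable_restrict_of_monotoneOn measurableSet_Ioo (quant_monotoneOn μ)

lemma vol_aux {c : ℝ} (h0 : 0 ≤ c) (h1 : c ≤ 1) :
    volume (Set.Iic c ∩ Set.Ioo (0:ℝ) 1) = ENNReal.ofReal c := by
  rcases h1.lt_or_eq with h | h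
  · have : Set.Iic c ∩ Set.Ioo (0:ℝ) 1 = Set.Ioc 0 c := by
      ext x; simp only [Set.mem_inter_iff, Set.mem_Iic, Set.mem_Ioo, Set.mem_Ioc]
      constructor
      · rintro ⟨a, b, d⟩; exact ⟨b, a⟩
      · rintro ⟨a, b⟩; exact ⟨b, a, by linarith⟩
    rw [this]; simp
  · subst h
    have : Set.Iic (1:ℝ) ∩ Set.Ioo (0:ℝ) 1 = Set.Ioo 0 1 :=
      Set.inter_eq_right.2 fun x hx => hx.2.le
    rw [this]; simp

open ProbabilityTheory in
lemma map_quant (μ : Measure ℝ) [IsProbabilityMeasure μ] :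
    (volume.restrict (Set.Ioo (0:ℝ) 1)).map (quant μ) = μ := by
  symm
  refine Measure.ext_of_Iic _ _ fun t => ?_
  rw [Measure.map_apply_of_aemeasurable (quant_aemeasurable μ) measurableSet_Iic]
  have : (quant μ ⁻¹' Set.Iic t) =ᵐ[volume.restrict (Set.Ioo (0:ℝ) 1)] Set.Iic (cdf μ t) := by
    filter_upwards [ae_restrict_mem measurableSet_Ioo] with u hu
    exact propext (quant_le_iff μ hu.1 hu.2 t)
  rw [measure_congr this, Measure.restrict_apply measurableSet_Iic,
    vol_aux (cdf_nonneg μ t) (cdf_le_one μ t), ofReal_cdf]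

open ProbabilityTheory in
/-- Quantile coupling bound. -/
lemma wassersteinInf_le (μ ν : Measure ℝ) [IsProbabilityMeasure μ] [IsProbabilityMeasure ν] (ε : ℝ)
    (h1 : ∀ t, cdf μ t ≤ cdf ν (t + ε)) (h2 : ∀ t, cdf ν t ≤ cdf μ (t + ε)) :
    wassersteinInf μ ν ≤ ENNReal.ofReal ε := by
  have hm : AEMeasurable (fun u => (quant μ u, quant ν u)) (volume.restrict (Set.Ioo (0:ℝ) 1)) :=
    (quant_aemeasurable μ).prodMk (quant_aemeasurable ν)
  unfold wassersteinInf
  refine iInf₂_le_of_le ((volume.restrict (Set.Ioo (0:ℝ) 1)).map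
    (fun u => (quant μ u, quant ν u))) ⟨?_, ?_⟩ ?_
  · rw [AEMeasurable.map_map_of_aemeasurable (by fun_prop) hm]
    exact map_quant μ
  · rw [AEMeasurable.map_map_of_aemeasurable (by fun_prop) hm]
    exact map_quant ν
  · refine essSup_le_of_ae_le _ ?_
    rw [EventuallyLE, ae_map_iff hm (measurableSet_le (by fun_prop) (by fun_prop))]
    filter_upwards [ae_restrict_mem measurableSet_Ioo] with u hu
    apply ENNReal.ofReal_le_ofReal
    have a1 : quant ν u ≤ quant μ u + ε := by
      rw [quant_le_iff ν hu.1 hu.2]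
      exact ((quant_le_iff μ hu.1 hu.2 _).1 le_rfl).trans (h1 _)
    have a2 : quant μ u ≤ quant ν u + ε := by
      rw [quant_le_iff μ hu.1 hu.2]
      exact ((quant_le_iff ν hu.1 hu.2 _).1 le_rfl).trans (h2 _)
    rw [abs_le]; constructor <;> linarith

open ProbabilityTheory in
lemma cdf_le_of_LP (μ ν : Measure ℝ) [IsProbabilityMeasure μ] [IsProbabilityMeasure ν] {δ : ℝ}
    (hδ : 0 < δ) (h : levyProkhorovEDist μ ν < ENNReal.ofReal δ) (t : ℝ) :
    cdf μ t ≤ cdf ν (t + δ) + δ := by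
  have h1 := left_measure_le_of_levyProkhorovEDist_lt h (measurableSet_Iic (a := t))
  rw [ENNReal.toReal_ofReal hδ.le] at h1
  have h2 : Metric.thickening δ (Set.Iic t) ⊆ Set.Iic (t + δ) := by
    intro x hx
    obtain ⟨z, hz, hd⟩ := Metric.mem_thickening_iff.1 hx
    rw [Real.dist_eq, abs_lt] at hd
    have : z ≤ t := hz
    simp only [Set.mem_Iic]; linarith
  have h3 := h1.trans (add_le_add_left (measure_mono h2) _)
  rw [← ofReal_cdf, ← ofReal_cdf, ← ENNReal.ofReal_add (cdf_nonneg _ _) hδ.le] at h3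
  exact (ENNReal.ofReal_le_ofReal_iff (add_nonneg (cdf_nonneg _ _) hδ.le)).1 h3

lemma unif_pos (μ : Measure ℝ) [IsProbabilityMeasure μ] {a b : ℝ}
    (hsupp : measureSupport μ = Set.Icc a b) {r : ℝ} (hr : 0 < r) :
    ∃ m > 0, ∀ s ∈ Set.Icc a b, m ≤ μ.real (Set.Ioo (s - r) (s + r)) := by
  refine (isCompact_Icc (a := a) (b := b)).induction_on
    (p := fun S => ∃ m > 0, ∀ s ∈ S, m ≤ μ.real (Set.Ioo (s - r) (s + r))) ?_ ?_ ?_ ?_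
  · exact ⟨1, one_pos, by simp⟩
  · rintro S T hST ⟨m, hm, h⟩
    exact ⟨m, hm, fun s hs => h s (hST hs)⟩
  · rintro S T ⟨m, hm, h⟩ ⟨m', hm', h'⟩
    refine ⟨min m m', lt_min hm hm', fun s hs => ?_⟩
    rcases hs with hs | hs
    · exact (min_le_left _ _).trans (h s hs)
    · exact (min_le_right _ _).trans (h' s hs)
  · intro s hs
    have hN : Set.Ioo (s - r/2) (s + r/2) ∈ 𝓝 s := Ioo_mem_nhds (by linarith) (by linarith)
    rw [← hsupp] at hs
    refine ⟨_, mem_nhdsWithin_of_mem_nhds hN, μ.real (Set.Ioo (s - r/2) (s + r/2)), ?_, ?_⟩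
    · exact ENNReal.toReal_pos (hs _ hN) (measure_ne_top _ _)
    · intro x hx
      refine measureReal_mono fun y hy => ⟨?_, ?_⟩
      · linarith [hx.1, hx.2, hy.1, hy.2]
      · linarith [hx.1, hx.2, hy.1, hy.2]

lemma ae_mem_supp (μ : Measure ℝ) {a b : ℝ} (hsupp : measureSupport μ = Set.Icc a b) :
    ∀ᵐ x ∂μ, x ∈ Set.Icc a b := by
  have : measureSupport μ = μ.support := by
    ext x; simp [measureSupport, Measure.mem_support_iff_forall, pos_iff_ne_zero]
  rw [← hsupp, this]
  exact Measure.support_mem_ae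

open ProbabilityTheory in
lemma cdf_gap (μ : Measure ℝ) [IsProbabilityMeasure μ] {x y : ℝ} {s r m : ℝ}
    (hm : m ≤ μ.real (Set.Ioo (s - r) (s + r))) (hx : x ≤ s - r) (hy : s + r ≤ y) (hr : 0 ≤ r):
    cdf μ x + m ≤ cdf μ y := by
  rw [cdf_eq_real, cdf_eq_real]
  have hd : Disjoint (Set.Iic x) (Set.Ioo (s - r) (s + r)) := by
    rw [Set.disjoint_left]
    intro z hz hz'
    have : z ≤ x := hz
    linarith [hz'.1]
  calc _ ≤ μ.real (Set.Iic x) + μ.real (Set.Ioo (s - r) (s + r)) := by linarith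
    _ = μ.real (Set.Iic x ∪ Set.Ioo (s - r) (s + r)) :=
      (measureReal_union hd measurableSet_Ioo).symm
    _ ≤ _ := by
      refine measureReal_mono ?_
      rintro z (hz | hz)
      · have : z ≤ x := hz
        simp only [Set.mem_Iic]; linarith
      · simp only [Set.mem_Iic]; linarith [hz.2]

open ProbabilityTheory in
lemma cdf_eq_zero' (μ : Measure ℝ) [IsProbabilityMeasure μ] {c t : ℝ} (h : ∀ᵐ x ∂μ, c ≤ x)
    (ht : t < c) : cdf μ t = 0 := by
  rw [cdf_eq_real, measureReal_def]
  have : μ (Set.Iic t) = 0 := by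
    rw [measure_eq_zero_iff_ae_notMem]
    filter_upwards [h] with x hx
    simp only [Set.mem_Iic]; linarith
  simp [this]

open ProbabilityTheory in
lemma cdf_eq_one' (μ : Measure ℝ) [IsProbabilityMeasure μ] {c t : ℝ} (h : ∀ᵐ x ∂μ, x ≤ c)
    (ht : c ≤ t) : cdf μ t = 1 := by
  rw [cdf_eq_real, measureReal_def]
  have : μ (Set.Iic t) = 1 := by
    rw [← mem_ae_iff_prob_eq_one measurableSet_Iic]
    filter_upwards [h] with x hx
    exact hx.trans ht
  simp [this]

open ProbabilityTheory in
lemma wass_small (μ ν : Measure ℝ) [IsProbabilityMeasure μ] [IsProbabilityMeasure ν] {a b : ℝ}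
    (hμ : ∀ᵐ x ∂μ, x ∈ Set.Icc a b) {ε δ m : ℝ} (hε : 0 < ε) (hδ : 0 < δ)
    (hδε : δ ≤ ε / 2) (hδm : δ ≤ m)
    (hm : ∀ s ∈ Set.Icc a b, m ≤ μ.real (Set.Ioo (s - ε/4) (s + ε/4)))
    (hLP : levyProkhorovEDist ν μ < ENNReal.ofReal δ)
    (hνa : ∀ᵐ x ∂ν, a - ε/4 ≤ x) (hνb : ∀ᵐ x ∂ν, x ≤ b + ε/4) :
    wassersteinInf ν μ ≤ ENNReal.ofReal ε := by
  have hμa : ∀ᵐ x ∂μ, a ≤ x := hμ.mono fun x hx => hx.1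
  have hμb : ∀ᵐ x ∂μ, x ≤ b := hμ.mono fun x hx => hx.2
  apply wassersteinInf_le
  · intro t
    rcases lt_or_ge t (a - ε/4) with h | h
    · rw [cdf_eq_zero' ν hνa h]; exact cdf_nonneg _ _
    rcases le_or_gt b (t + ε) with h' | h'
    · rw [cdf_eq_one' μ hμb h']; exact cdf_le_one _ _
    have h1 := cdf_le_of_LP ν μ hδ hLP t
    have h2 := cdf_gap μ (x := t + δ) (y := t + ε) (hm (t + 3*ε/4) ⟨by linarith, by linarith⟩)
      (by linarith) (by linarith) (by linarith)
    linarith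
  · intro t
    rcases lt_or_ge t a with h | h
    · rw [cdf_eq_zero' μ hμa h]; exact cdf_nonneg _ _
    rcases le_or_gt (b + ε/4) (t + ε) with h' | h'
    · rw [cdf_eq_one' ν hνb h']; exact cdf_le_one _ _
    rw [levyProkhorovEDist_comm] at hLP
    have h1 := cdf_le_of_LP μ ν hδ hLP (t + ε - δ)
    rw [sub_add_cancel] at h1
    have h2 := cdf_gap μ (x := t) (y := t + ε - δ) (hm (t + ε/4) ⟨by linarith, by linarith⟩)
      (by linarith) (by linarith) (by linarith)
    linarith

lemma coupling_of_lt (μ ν : Measure ℝ) {ε : ℝ} (hε : 0 < ε)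
    (h : wassersteinInf ν μ < ENNReal.ofReal ε) :
    ∃ π : Measure (ℝ × ℝ), π.map Prod.fst = ν ∧ π.map Prod.snd = μ ∧
      ∀ᵐ p ∂π, |p.1 - p.2| ≤ ε := by
  unfold wassersteinInf at h
  simp only [iInf_lt_iff] at h
  obtain ⟨π, ⟨h1, h2⟩, h3⟩ := h
  refine ⟨π, h1, h2, ?_⟩
  filter_upwards [ENNReal.ae_le_essSup (μ := π)
    (fun p : ℝ × ℝ => ENNReal.ofReal |p.1 - p.2|)] with p hp
  exact (ENNReal.ofReal_le_ofReal_iff hε.le).1 (hp.trans h3.le)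

lemma bdd_above_of (ν : Measure ℝ) (h : ∃ R : ℝ, ν (Set.Icc (-R) R)ᶜ = 0) :
    IsBoundedUnder (· ≤ ·) (ae ν) (id : ℝ → ℝ) ∧ IsBoundedUnder (· ≥ ·) (ae ν) (id : ℝ → ℝ) := by
  obtain ⟨R, hR⟩ := h
  have : ∀ᵐ x ∂ν, x ∈ Set.Icc (-R) R := hR
  exact ⟨isBoundedUnder_of_eventually_le (a := R) (this.mono fun x hx => hx.2),
    isBoundedUnder_of_eventually_ge (a := -R) (this.mono fun x hx => hx.1)⟩

lemma ess_close (μ ν : Measure ℝ) [IsProbabilityMeasure μ] [IsProbabilityMeasure ν] {a b : ℝ}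
    (hab : a < b) (hsupp : measureSupport μ = Set.Icc a b)
    (hb : ∃ R : ℝ, ν (Set.Icc (-R) R)ᶜ = 0) {ε : ℝ} (hε : 0 < ε)
    (h : wassersteinInf ν μ < ENNReal.ofReal ε) :
    |essSup (id : ℝ → ℝ) ν - b| ≤ 2 * ε ∧ |essInf (id : ℝ → ℝ) ν - a| ≤ 2 * ε := by
  obtain ⟨π, h1, h2, h3⟩ := coupling_of_lt μ ν hε h
  obtain ⟨hB1, hB2⟩ := bdd_above_of ν hb
  have hS := ae_mem_supp μ hsupp
  have hx : ∀ᵐ x ∂ν, a - ε ≤ x ∧ x ≤ b + ε := by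
    rw [← h1, ae_map_iff (by fun_prop) (measurableSet_Icc (a := a - ε) (b := b + ε))]
    rw [← h2] at hS
    filter_upwards [h3, ae_of_ae_map (by fun_prop) hS] with p hp hp'
    rw [abs_le] at hp
    constructor <;> linarith [hp'.1, hp'.2]
  have key : ∀ c d : ℝ, (∀ᵐ x ∂ν, x ∈ Set.Icc c d) → ∀ᵐ y ∂μ, y ∈ Set.Icc (c - ε) (d + ε) := by
    intro c d hcd
    rw [← h2]
    refine (ae_map_iff measurable_snd.aemeasurable
      (measurableSet_Icc (a := c - ε) (b := d + ε))).2 ?_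
    rw [← h1] at hcd
    filter_upwards [h3, ae_of_ae_map (by fun_prop) hcd] with p hp hp'
    rw [abs_le] at hp
    constructor <;> linarith [hp'.1, hp'.2]
  have hE := key (essInf id ν) (essSup id ν) (by
    filter_upwards [ae_le_essSup hB1, ae_essInf_le hB2] with x hx1 hx2
    exact ⟨hx2, hx1⟩)
  have hsub : Set.Icc a b ⊆ Set.Icc (essInf id ν - ε) (essSup id ν + ε) := by
    rw [← hsupp]
    intro x hx
    by_contra hcon
    exact hx _ (isClosed_Icc.isOpen_compl.mem_nhds hcon) hE
  have ha := hsub ⟨le_rfl, hab.le⟩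
  have hb' := hsub ⟨hab.le, le_rfl⟩
  have u1 : essSup (id : ℝ → ℝ) ν ≤ b + ε :=
    essSup_le_of_ae_le _ (hx.mono fun x h => h.2) hB2.isCoboundedUnder_le
  have u2 : a - ε ≤ essInf (id : ℝ → ℝ) ν :=
    le_essInf_of_ae_le _ (hx.mono fun x h => h.1) hB1.isCoboundedUnder_ge
  rw [abs_le, abs_le]
  refine ⟨⟨?_, ?_⟩, ?_, ?_⟩ <;> linarith [ha.1, hb'.2]

lemma integral_close (μ ν : Measure ℝ) [IsProbabilityMeasure μ] [IsProbabilityMeasure ν]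
    (f : BoundedContinuousFunction ℝ ℝ) {L : NNReal} (hL : LipschitzWith L f) {ε : ℝ} (hε : 0 < ε)
    (h : wassersteinInf ν μ < ENNReal.ofReal ε) :
    |∫ x, f x ∂ν - ∫ x, f x ∂μ| ≤ L * ε := by
  obtain ⟨π, h1, h2, h3⟩ := coupling_of_lt μ ν hε h
  have hπ : IsProbabilityMeasure π := by
    refine ⟨?_⟩
    have : (π.map Prod.fst) Set.univ = 1 := by rw [h1]; simp
    rwa [Measure.map_apply (by fun_prop) MeasurableSet.univ, Set.preimage_univ] at this
  have i1 : ∫ x, f x ∂ν = ∫ p, f p.1 ∂π := by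
    rw [← h1, integral_map (by fun_prop) f.continuous.aestronglyMeasurable]
  have i2 : ∫ x, f x ∂μ = ∫ p, f p.2 ∂π := by
    rw [← h2, integral_map (by fun_prop) f.continuous.aestronglyMeasurable]
  have j1 : Integrable (fun p : ℝ × ℝ => f p.1) π := by
    refine Integrable.of_bound (f.continuous.comp continuous_fst).aestronglyMeasurable ‖f‖ ?_
    exact ae_of_all _ fun p => f.norm_coe_le_norm _
  have j2 : Integrable (fun p : ℝ × ℝ => f p.2) π := by
    refine Integrable.of_bound (f.continuous.comp continuous_snd).aestronglyMeasurable ‖f‖ ?_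
    exact ae_of_all _ fun p => f.norm_coe_le_norm _
  rw [i1, i2, ← integral_sub j1 j2, ← Real.norm_eq_abs]
  have := norm_integral_le_of_norm_le_const (μ := π) (f := fun p : ℝ × ℝ => f p.1 - f p.2)
    (C := L * ε) (by
      filter_upwards [h3] with p hp
      have := hL.dist_le_mul p.1 p.2
      rw [Real.dist_eq, Real.dist_eq] at this
      rw [Real.norm_eq_abs]
      exact this.trans (mul_le_mul_of_nonneg_left hp L.2))
  simpa using this

/-- **Convergence in the `∞`-Wasserstein distance** (Aubrun–Szarek–Ye, Lemma 7).
Let `Z` have law `μ_Z` whose support equals a bounded interval `[a,b]`, `a < b`, and let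
`(Y_n)` be bounded real random variables with laws `ν n`.  Then `d_∞(Y_n, Z) → 0` iff
`Y_n → Z` weakly, `ess sup Y_n → b` and `ess inf Y_n → a`. -/
theorem wassersteinInf_convergence_iff
    (μZ : Measure ℝ) (hμZ : IsProbabilityMeasure μZ) (a b : ℝ) (hab : a < b)
    (hsupp : measureSupport μZ = Set.Icc a b)
    (ν : ℕ → Measure ℝ) (hν : ∀ n, IsProbabilityMeasure (ν n))
    (hbdd : ∀ n, ∃ R : ℝ, (ν n) (Set.Icc (-R) R)ᶜ = 0) :
    Tendsto (fun n => wassersteinInf (ν n) μZ) atTop (𝓝 0) ↔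
      ((∀ f : BoundedContinuousFunction ℝ ℝ,
          Tendsto (fun n => ∫ x, f x ∂(ν n)) atTop (𝓝 (∫ x, f x ∂μZ))) ∧
        Tendsto (fun n => essSup (id : ℝ → ℝ) (ν n)) atTop (𝓝 b) ∧
        Tendsto (fun n => essInf (id : ℝ → ℝ) (ν n)) atTop (𝓝 a)) := by
  classical
  have tend0 : ∀ {u : ℕ → ℝ} {c K : ℝ}, 0 ≤ K →
      Tendsto (fun n => wassersteinInf (ν n) μZ) atTop (𝓝 0) →
      (∀ n ε, 0 < ε → wassersteinInf (ν n) μZ < ENNReal.ofReal ε → |u n - c| ≤ K * ε) →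
      Tendsto u atTop (𝓝 c) := by
    intro u c K hK hW hu
    rw [Metric.tendsto_atTop']
    intro ε hε
    have hε' : 0 < ε / (K + 1) := by positivity
    obtain ⟨N, hN⟩ := eventually_atTop.1
      (hW.eventually_lt_const (ENNReal.ofReal_pos.2 hε'))
    refine ⟨N, fun n hn => ?_⟩
    rw [Real.dist_eq]
    refine (hu n _ hε' (hN n hn.le)).trans_lt ?_
    rw [mul_div_assoc', div_lt_iff₀ (by positivity)]
    nlinarith
  let P : ℕ → ProbabilityMeasure ℝ := fun n => ⟨ν n, hν n⟩
  let Q : ProbabilityMeasure ℝ := ⟨μZ, hμZ⟩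
  constructor
  · intro hW
    refine ⟨?_, ?_, ?_⟩
    · have hPQ : Tendsto P atTop (𝓝 Q) := by
        rw [tendsto_iff_forall_lipschitz_integral_tendsto]
        rintro f hf ⟨L, hL⟩
        exact tend0 L.2 hW fun n ε hε h =>
          integral_close μZ (ν n) ⟨⟨f, hL.continuous⟩, hf⟩ hL hε h
      exact ProbabilityMeasure.tendsto_iff_forall_integral_tendsto.1 hPQ
    · exact tend0 zero_le_two hW fun n ε hε h =>
        (ess_close μZ (ν n) hab hsupp (hbdd n) hε h).1
    · exact tend0 zero_le_two hW fun n ε hε h =>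
        (ess_close μZ (ν n) hab hsupp (hbdd n) hε h).2
  · rintro ⟨hf, hs, hi⟩
    have hPQ : Tendsto P atTop (𝓝 Q) :=
      ProbabilityMeasure.tendsto_iff_forall_integral_tendsto.2 hf
    have hLP := (LevyProkhorov.continuous_ofMeasure_probabilityMeasure.tendsto Q).comp hPQ
    rw [tendsto_iff_edist_tendsto_0] at hLP
    rw [ENNReal.tendsto_nhds_zero]
    intro η hη
    obtain ⟨ε, hε, hεη⟩ : ∃ ε : ℝ, 0 < ε ∧ ENNReal.ofReal ε ≤ η := by
      rcases eq_or_ne η ⊤ with h | h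
      · exact ⟨1, one_pos, by simp [h]⟩
      · exact ⟨η.toReal, ENNReal.toReal_pos hη.ne' h, by rw [ENNReal.ofReal_toReal h]⟩
    obtain ⟨m, hm0, hm⟩ := unif_pos μZ hsupp (r := ε / 4) (by positivity)
    have hδ : 0 < min (ε / 2) m := lt_min (by positivity) hm0
    filter_upwards [hLP.eventually_lt_const (ENNReal.ofReal_pos.2 hδ),
      hs.eventually_lt_const (show b < b + ε / 4 by linarith),
      hi.eventually_const_lt (show a - ε / 4 < a by linarith)] with n h1 h2 h3
    obtain ⟨hB1, hB2⟩ := bdd_above_of (ν n) (hbdd n)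
    refine le_trans (wass_small μZ (ν n) (ae_mem_supp μZ hsupp) hε hδ (min_le_left _ _)
      (min_le_right _ _) hm h1 ?_ ?_) hεη
    · exact (ae_lt_of_lt_essInf h3 hB2).mono fun x hx => hx.le
    · exact (ae_lt_of_essSup_lt h2 hB1).mono fun x hx => hx.le
end

section
/- Let Z be a non-constant bounded real random variable with mean 0 and law μ_Z. Then for every ε > 0 there exists η > 0 (depending only on Z and ε) such that for every integer n ≥ 1 and all vectors x, y ∈ R^{n,0} with y ≠ 0 satisfying d_∞(ν_x, μ_Z) ≤ η and d_∞(ν_y, μ_Z) ≤ η, one has δ(x,y) ≤ 1 + ε, i.e., x ≺ (1+ε)·y. -/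
open MeasureTheory Filter Topology
open scoped ENNReal BigOperators

noncomputable section

/-- The `n`-point empirical measure `ν_x = (1/n) Σ δ_{x_k}` of a vector `x ∈ ℝⁿ`. -/
def empMeasure {n : ℕ} (x : Fin n → ℝ) : Measure ℝ :=
  ((n : ℝ≥0∞))⁻¹ • ∑ k : Fin n, Measure.dirac (x k)

/-- The sum of the `k` largest coordinates of a vector `x ∈ ℝⁿ`. -/
def sumLargest {n : ℕ} (x : Fin n → ℝ) (k : ℕ) : ℝ :=
  sSup {r : ℝ | ∃ s : Finset (Fin n), s.card = k ∧ r = ∑ i ∈ s, x i}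

/-- Majorization `x ≺ y` for vectors in the hyperplane of sum-zero vectors: for every
`k`, the sum of the `k` largest coordinates of `x` is at most the corresponding sum
for `y`. -/
def IsMajorizedBy {n : ℕ} (x y : Fin n → ℝ) : Prop :=
  ∀ k : ℕ, k ≤ n → sumLargest x k ≤ sumLargest y k

end

lemma mw_coupling {ν μ : Measure ℝ} {η h : ℝ} (hη : 0 < η) (hh : η < h)
    (H : wassersteinInf ν μ ≤ ENNReal.ofReal η) :
    ∃ π : Measure (ℝ × ℝ), π.map Prod.fst = ν ∧ π.map Prod.snd = μ ∧
      ∀ᵐ p ∂π, |p.1 - p.2| ≤ h := by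
  have h1 : wassersteinInf ν μ < ENNReal.ofReal h :=
    lt_of_le_of_lt H ((ENNReal.ofReal_lt_ofReal_iff (hη.trans hh)).2 hh)
  unfold wassersteinInf at h1
  simp only [iInf_lt_iff] at h1
  obtain ⟨π, ⟨ha, hb⟩, hc⟩ := h1
  refine ⟨π, ha, hb, ?_⟩
  filter_upwards [ENNReal.ae_le_essSup (μ := π)
    (fun p : ℝ × ℝ => ENNReal.ofReal |p.1 - p.2|)] with p hp
  exact (ENNReal.ofReal_le_ofReal_iff (hη.trans hh).le).1 (hp.trans hc.le)

lemma mw_integral_le {ν μ : Measure ℝ} {π : Measure (ℝ × ℝ)} {h : ℝ}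
    (h1 : π.map Prod.fst = ν) (h2 : π.map Prod.snd = μ)
    (h3 : ∀ᵐ p ∂π, |p.1 - p.2| ≤ h) (f g : ℝ → ℝ)
    (hf : Integrable f ν) (hg : Integrable g μ)
    (hfg : ∀ u v, |u - v| ≤ h → f u ≤ g v) :
    ∫ u, f u ∂ν ≤ ∫ v, g v ∂μ := by
  subst h1 h2
  rw [integral_map measurable_fst.aemeasurable hf.1,
    integral_map measurable_snd.aemeasurable hg.1]
  apply integral_mono_ae
  · exact (integrable_map_measure hf.1 measurable_fst.aemeasurable).1 hf
  · exact (integrable_map_measure hg.1 measurable_snd.aemeasurable).1 hg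
  · filter_upwards [h3] with p hp using hfg _ _ hp

lemma mw_integral_ge {ν μ : Measure ℝ} {π : Measure (ℝ × ℝ)} {h : ℝ}
    (h1 : π.map Prod.fst = ν) (h2 : π.map Prod.snd = μ)
    (h3 : ∀ᵐ p ∂π, |p.1 - p.2| ≤ h) (f g : ℝ → ℝ)
    (hf : Integrable f ν) (hg : Integrable g μ)
    (hfg : ∀ u v, |u - v| ≤ h → g v ≤ f u) :
    ∫ v, g v ∂μ ≤ ∫ u, f u ∂ν := by
  have := mw_integral_le h1 h2 h3 (fun u => - f u) (fun v => - g v) hf.neg hg.neg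
    (fun u v huv => neg_le_neg (hfg u v huv))
  rw [integral_neg, integral_neg] at this
  linarith

lemma mw_emp_integrable {n : ℕ} (hn : 1 ≤ n) (x : Fin n → ℝ) (f : ℝ → ℝ) :
    Integrable f (empMeasure x) := by
  unfold empMeasure
  apply Integrable.smul_measure
  · rw [integrable_finsetSum_measure]
    intro i _
    exact integrable_dirac (by simp)
  · simp; omega

lemma mw_emp_integral {n : ℕ} (x : Fin n → ℝ) (f : ℝ → ℝ) :
    ∫ u, f u ∂(empMeasure x) = (n : ℝ)⁻¹ * ∑ i, f (x i) := by
  unfold empMeasure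
  rw [integral_smul_measure, integral_finsetSum_measure]
  · simp
  · intro i _
    exact integrable_dirac (by simp)

lemma mw_threshold {n : ℕ} (hn : 1 ≤ n) (y : Fin n → ℝ) (k : ℕ) (hk : k ≤ n) :
    ∃ (s : Finset (Fin n)) (t : ℝ), s.card = k ∧ (∀ i ∈ s, t ≤ y i) ∧ ∀ i ∉ s, y i ≤ t := by
  have hne : (Finset.powersetCard k (Finset.univ : Finset (Fin n))).Nonempty := by
    apply Finset.powersetCard_nonempty.2; simpa using hk
  obtain ⟨s, hs, hmax⟩ := Finset.exists_max_image _ (fun s => ∑ i ∈ s, y i) hne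
  have hcard := (Finset.mem_powersetCard.1 hs).2
  have key : ∀ i ∈ s, ∀ j ∉ s, y j ≤ y i := by
    intro i hi j hj
    have hj' : j ∉ s.erase i := fun h => hj (Finset.mem_of_mem_erase h)
    have := hmax (insert j (s.erase i)) (by
      rw [Finset.mem_powersetCard]
      refine ⟨Finset.subset_univ _, ?_⟩
      rw [Finset.card_insert_of_notMem hj', Finset.card_erase_add_one hi, hcard])
    rw [Finset.sum_insert hj', ← Finset.add_sum_erase s y hi] at this
    linarith
  rcases s.eq_empty_or_nonempty with h0 | h0
  · subst h0
    have : Nonempty (Fin n) := ⟨⟨0, hn⟩⟩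
    refine ⟨∅, Finset.univ.sup' Finset.univ_nonempty y, hcard, by simp, fun i _ => ?_⟩
    exact Finset.le_sup' y (Finset.mem_univ i)
  · refine ⟨s, s.inf' h0 y, hcard, fun i hi => Finset.inf'_le y hi, fun j hj => ?_⟩
    exact (Finset.le_inf'_iff h0 y).2 fun i hi => key i hi j hj

lemma mw_le_pos {n : ℕ} (x : Fin n → ℝ) (t : ℝ) (s : Finset (Fin n)) :
    ∑ i ∈ s, x i ≤ s.card * t + ∑ i, max (x i - t) 0 := by
  have h1 : ∑ i ∈ s, x i ≤ ∑ i ∈ s, (t + max (x i - t) 0) :=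
    Finset.sum_le_sum fun i _ => by linarith [le_max_left (x i - t) 0]
  have h2 : ∑ i ∈ s, max (x i - t) 0 ≤ ∑ i, max (x i - t) 0 :=
    Finset.sum_le_sum_of_subset_of_nonneg (Finset.subset_univ _) fun i _ _ => le_max_right _ _
  rw [Finset.sum_add_distrib, Finset.sum_const, nsmul_eq_mul] at h1
  linarith

lemma mw_eq_pos {n : ℕ} (y : Fin n → ℝ) (t : ℝ) (s : Finset (Fin n))
    (h1 : ∀ i ∈ s, t ≤ y i) (h2 : ∀ i ∉ s, y i ≤ t) :
    ∑ i ∈ s, y i = s.card * t + ∑ i, max (y i - t) 0 := by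
  have h3 : ∑ i ∈ s, max (y i - t) 0 = ∑ i, max (y i - t) 0 :=
    Finset.sum_subset (Finset.subset_univ _) fun i _ hi =>
      max_eq_right (by linarith [h2 i hi])
  rw [← h3, ← nsmul_eq_mul, ← Finset.sum_const, ← Finset.sum_add_distrib]
  refine Finset.sum_congr rfl fun i hi => ?_
  rw [max_eq_left (by linarith [h1 i hi])]; ring

lemma mw_flip {n : ℕ} (x : Fin n → ℝ) (hx : ∑ i, x i = 0) (t : ℝ) :
    ∑ i, max (x i - t) 0 = ∑ i, max (t - x i) 0 - n * t := by
  have : ∀ i, max (x i - t) 0 = max (t - x i) 0 + x i - t := by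
    intro i
    rcases le_total (x i) t with h | h
    · rw [max_eq_right (by linarith), max_eq_left (by linarith)]; ring
    · rw [max_eq_left (by linarith), max_eq_right (by linarith)]; ring
  rw [Finset.sum_congr rfl fun i _ => this i, Finset.sum_sub_distrib, Finset.sum_add_distrib, hx]
  simp

lemma mw_pos_mean (μ : Measure ℝ) [IsProbabilityMeasure μ] (hi : Integrable (fun x : ℝ => x) μ)
    (hnc : ∀ c : ℝ, μ ≠ Measure.dirac c) (hmean : ∫ x, x ∂μ = 0) :
    0 < ∫ x, max x 0 ∂μ := by
  have hip : Integrable (fun x : ℝ => max x 0) μ := hi.pos_part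
  have hnn : 0 ≤ ∫ x, max x 0 ∂μ := integral_nonneg fun x => le_max_right _ _
  refine lt_of_le_of_ne hnn fun h0 => hnc 0 ?_
  have e1 : (fun x : ℝ => max x 0 - x) =ᵐ[μ] 0 := by
    refine (integral_eq_zero_iff_of_nonneg (fun x => by simp) (hip.sub hi)).1 ?_
    change ∫ x, (max x 0 - x) ∂μ = 0
    rw [integral_sub hip hi, ← h0, hmean, sub_zero]
  have e2 : (fun x : ℝ => max x 0) =ᵐ[μ] 0 := by
    exact (integral_eq_zero_iff_of_nonneg (f := fun x : ℝ => max x 0)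
      (fun x => le_max_right _ _) hip).1 h0.symm
  have e3 : (fun x : ℝ => x) =ᵐ[μ] fun _ => (0 : ℝ) := by
    filter_upwards [e1, e2] with x h1 h2
    simp only [Pi.zero_apply] at h1 h2
    linarith
  have : μ.map (fun x : ℝ => x) = μ.map (fun _ => (0 : ℝ)) := Measure.map_congr e3
  rw [Measure.map_const, measure_univ, one_smul] at this
  exact (Measure.map_id (μ := μ)).symm.trans this

lemma mw_max_mono {a b : ℝ} (h : a ≤ b) : max a 0 ≤ max b 0 := max_le_max h le_rfl

/-- **Quantitative majorization from Wasserstein approximation**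
(Aubrun–Szarek–Ye, Lemma 8).  Let `Z` be a non-constant bounded random variable with
mean `0` and law `μ_Z`.  For every `ε > 0` there is `η > 0` such that for every `n` and
all sum-zero vectors `x, y ∈ ℝⁿ` with `y ≠ 0`, `d_∞(ν_x, μ_Z) ≤ η` and
`d_∞(ν_y, μ_Z) ≤ η`, one has `δ(x,y) ≤ 1 + ε`, i.e. `x ≺ (1+ε)·y`. -/
theorem majorization_from_wasserstein
    (μZ : Measure ℝ) (hμZ : IsProbabilityMeasure μZ)
    (hbdd : ∃ R : ℝ, μZ (Set.Icc (-R) R)ᶜ = 0)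
    (hnc : ∀ c : ℝ, μZ ≠ Measure.dirac c)
    (hmean : ∫ x, x ∂μZ = 0) :
    ∀ ε : ℝ, 0 < ε → ∃ η : ℝ, 0 < η ∧
      ∀ n : ℕ, 1 ≤ n → ∀ x y : Fin n → ℝ,
        (∑ i, x i) = 0 → (∑ i, y i) = 0 → y ≠ 0 →
        wassersteinInf (empMeasure x) μZ ≤ ENNReal.ofReal η →
        wassersteinInf (empMeasure y) μZ ≤ ENNReal.ofReal η →
        IsMajorizedBy x ((1 + ε) • y) := by
  intro ε hε
  obtain ⟨R, hR⟩ := hbdd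
  have hi : Integrable (fun x : ℝ => x) μZ := by
    refine Integrable.of_bound (C := R) measurable_id.aestronglyMeasurable ?_
    have : ∀ᵐ x ∂μZ, x ∈ Set.Icc (-R) R := hR
    filter_upwards [this] with x hx
    exact abs_le.2 hx
  have hic : ∀ c : ℝ, Integrable (fun v : ℝ => max (v - c) 0) μZ := fun c =>
    (hi.sub (integrable_const c)).pos_part
  have hid : ∀ c : ℝ, Integrable (fun v : ℝ => max (c - v) 0) μZ := fun c =>
    ((integrable_const c).sub hi).pos_part
  have ha := mw_pos_mean μZ hi hnc hmean
  set a := ∫ x, max x 0 ∂μZ with ha_def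
  obtain ⟨h, hh, hhε⟩ : ∃ h : ℝ, 0 < h ∧ 2 * h ≤ ε * (a - h) := by
    refine ⟨ε * a / (2 + ε), by positivity, le_of_eq ?_⟩
    field_simp
    ring
  refine ⟨h / 2, by linarith, ?_⟩
  intro n hn x y hx hy _ Wx Wy k hk
  obtain ⟨π, p1, p2, p3⟩ := mw_coupling (by linarith) (by linarith : h / 2 < h) Wx
  obtain ⟨ρ, q1, q2, q3⟩ := mw_coupling (by linarith) (by linarith : h / 2 < h) Wy
  have hn0 : (0 : ℝ) < n := by exact_mod_cast hn
  have hinv : (0 : ℝ) < (n : ℝ)⁻¹ := inv_pos.2 hn0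
  have hkn : (k : ℝ) ≤ n := by exact_mod_cast hk
  have hk0 : (0 : ℝ) ≤ k := k.cast_nonneg
  obtain ⟨s, t, hs, hs1, hs2⟩ := mw_threshold hn y k hk
  have hy1 := mw_eq_pos y t s hs1 hs2
  rw [hs] at hy1
  -- comparison of positive parts
  have A1 : ∑ i, max (x i - (t + 2 * h)) 0 ≤ ∑ i, max (y i - t) 0 := by
    have u1 := mw_integral_le p1 p2 p3 (fun u => max (u - (t + 2 * h)) 0)
      (fun v => max (v - (t + h)) 0) (mw_emp_integrable hn _ _) (hic _)
      (fun u v huv => mw_max_mono (by linarith [(abs_le.1 huv).2]))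
    have u2 := mw_integral_ge q1 q2 q3 (fun u => max (u - t) 0)
      (fun v => max (v - (t + h)) 0) (mw_emp_integrable hn _ _) (hic _)
      (fun u v huv => mw_max_mono (by linarith [(abs_le.1 huv).1]))
    have u3 := u1.trans u2
    rw [mw_emp_integral, mw_emp_integral] at u3
    exact le_of_mul_le_mul_left u3 hinv
  have A2 : ∑ i, max ((t - 2 * h) - x i) 0 ≤ ∑ i, max (t - y i) 0 := by
    have u1 := mw_integral_le p1 p2 p3 (fun u => max ((t - 2 * h) - u) 0)
      (fun v => max ((t - h) - v) 0) (mw_emp_integrable hn _ _) (hid _)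
      (fun u v huv => mw_max_mono (by linarith [(abs_le.1 huv).1]))
    have u2 := mw_integral_ge q1 q2 q3 (fun u => max (t - u) 0)
      (fun v => max ((t - h) - v) 0) (mw_emp_integrable hn _ _) (hid _)
      (fun u v huv => mw_max_mono (by linarith [(abs_le.1 huv).2]))
    have u3 := u1.trans u2
    rw [mw_emp_integral, mw_emp_integral] at u3
    exact le_of_mul_le_mul_left u3 hinv
  have A3 : n * (a - h) ≤ ∑ i, max (y i - 0) 0 := by
    have u2 := mw_integral_ge q1 q2 q3 (fun u => max (u - 0) 0)
      (fun v => max v 0 - h) (mw_emp_integrable hn _ _)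
      (hi.pos_part.sub (integrable_const h))
      (fun u v huv => by
        have := (abs_le.1 huv).1
        rw [sub_le_iff_le_add]
        apply max_le
        · linarith [le_max_left (u - 0) 0]
        · linarith [le_max_right (u - 0) 0])
    rw [mw_emp_integral, integral_sub hi.pos_part (integrable_const h)] at u2
    simp only [integral_const, probReal_univ, one_smul] at u2
    rw [← div_eq_inv_mul, le_div_iff₀ hn0] at u2
    linarith
  have F0 := mw_flip y hy 0
  have Ft := mw_flip y hy t
  -- main inequality
  have main : ∀ s' : Finset (Fin n), s'.card = k → ∑ i ∈ s', x i ≤ (1 + ε) * ∑ i ∈ s, y i := by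
    intro s' hs'
    rcases le_total 0 t with ht | ht
    · have B1 := mw_le_pos x (t + 2 * h) s'
      rw [hs'] at B1
      have B2 : ∑ i, max (y i - 0) 0 ≤ ∑ i, max (y i - t) 0 + n * t := by
        have : ∑ i, max (y i - 0) 0 ≤ ∑ i, (max (y i - t) 0 + t) :=
          Finset.sum_le_sum fun i _ => max_le (by linarith [le_max_left (y i - t) 0])
            (by linarith [le_max_right (y i - t) 0])
        simpa [Finset.sum_add_distrib] using this
      have B0 : 0 ≤ ∑ i, max (y i - t) 0 := Finset.sum_nonneg fun i _ => le_max_right _ _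
      have B3 : k * (a - h) ≤ ∑ i ∈ s, y i := by
        rw [hy1]
        have c1 : n * (a - h) ≤ ∑ i, max (y i - t) 0 + n * t := A3.trans B2
        have c2 := mul_le_mul_of_nonneg_left c1 hk0
        have c3 := mul_le_mul_of_nonneg_right hkn B0
        refine le_of_mul_le_mul_left ?_ hn0
        linarith
      have B4 := mul_le_mul_of_nonneg_left B3 hε.le
      have B5 := mul_le_mul_of_nonneg_left hhε hk0
      linarith
    · have B1 := mw_le_pos x (t - 2 * h) s'
      rw [hs', mw_flip x hx] at B1
      have B2 : ∑ i, max (0 - y i) 0 ≤ ∑ i, max (t - y i) 0 - n * t := by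
        have : ∑ i, max (0 - y i) 0 ≤ ∑ i, (max (t - y i) 0 - t) :=
          Finset.sum_le_sum fun i _ => max_le (by linarith [le_max_left (t - y i) 0])
            (by linarith [le_max_right (t - y i) 0])
        rw [Finset.sum_sub_distrib] at this
        simpa using this
      have B0 : 0 ≤ ∑ i, max (t - y i) 0 := Finset.sum_nonneg fun i _ => le_max_right _ _
      have hnk : (0 : ℝ) ≤ n - k := by linarith
      have B3 : (n - k) * (a - h) ≤ ∑ i ∈ s, y i := by
        rw [hy1, Ft]
        have c1 : n * (a - h) ≤ ∑ i, max (t - y i) 0 - n * t := by linarith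
        have c2 := mul_le_mul_of_nonneg_left c1 hnk
        have c3 := mul_nonneg hk0 B0
        refine le_of_mul_le_mul_left ?_ hn0
        linarith
      have B4 := mul_le_mul_of_nonneg_left B3 hε.le
      have B5 := mul_le_mul_of_nonneg_left hhε hnk
      linarith
  unfold sumLargest
  have hfin : {r : ℝ | ∃ s : Finset (Fin n), s.card = k ∧
      r = ∑ i ∈ s, ((1 + ε) • y) i}.Finite := by
    refine (Set.finite_range fun s : Finset (Fin n) => ∑ i ∈ s, ((1 + ε) • y) i).subset ?_
    rintro r ⟨s, _, rfl⟩
    exact ⟨s, rfl⟩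
  refine csSup_le ⟨∑ i ∈ s, x i, s, hs, rfl⟩ ?_
  rintro r ⟨s', hs', rfl⟩
  refine (main s' hs').trans (le_csSup hfin.bddAbove ⟨s, hs, ?_⟩)
  simp [Finset.mul_sum]
end

section
/- Let Z be a non-constant bounded real random variable with mean 0, set a = ess inf Z and b = ess sup Z (so a < 0 < b), and let ε > 0. Define f(t) = E|Z − t| and g(t) = E|(1+ε)Z − t| for t ∈ R. Then f(t) < g(t) for every t in the open interval ((1+ε)a, (1+ε)b). -/
open MeasureTheory
open scoped ENNReal

/-- **Strict comparison of the mean deviations of `Z` and `(1+ε)Z`**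
(Aubrun–Szarek–Ye, Lemma 9).  Let `Z` be a non-constant bounded real random variable
with mean `0` and law `μ`, and let `a = ess inf Z`, `b = ess sup Z` (so `a < 0 < b`).
For `ε > 0`, setting `f(t) = E|Z − t|` and `g(t) = E|(1+ε)Z − t|`, one has
`f(t) < g(t)` for every `t ∈ ((1+ε)a, (1+ε)b)`. -/
theorem mean_deviation_strict_comparison
    (μ : Measure ℝ) (hμ : IsProbabilityMeasure μ)
    (hbdd : ∃ R : ℝ, μ (Set.Icc (-R) R)ᶜ = 0)
    (hnc : ∀ c : ℝ, μ ≠ Measure.dirac c)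
    (hmean : ∫ x, x ∂μ = 0)
    (a b : ℝ) (ha : a = essInf (id : ℝ → ℝ) μ) (hb : b = essSup (id : ℝ → ℝ) μ)
    (ε : ℝ) (hε : 0 < ε) :
    ∀ t ∈ Set.Ioo ((1 + ε) * a) ((1 + ε) * b),
      ∫ x, |x - t| ∂μ < ∫ x, |(1 + ε) * x - t| ∂μ := by
  intro t ht
  obtain ⟨R, hR⟩ := hbdd
  have hae : ∀ᵐ x ∂μ, x ∈ Set.Icc (-R) R := hR
  have hid : Integrable (fun x : ℝ => x) μ := by
    refine Integrable.of_bound (C := R) measurable_id.aestronglyMeasurable ?_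
    filter_upwards [hae] with x hx
    rw [Real.norm_eq_abs, abs_le]
    exact hx
  have hl : 0 < 1 + ε := by linarith
  have hY : Integrable (fun x : ℝ => (1 + ε) * x - t) μ :=
    (hid.const_mul _).sub (integrable_const t)
  have hX : Integrable (fun x : ℝ => x - t) μ := hid.sub (integrable_const t)
  have hYint : ∫ x, ((1 + ε) * x - t) ∂μ = -t := by
    rw [integral_sub (hid.const_mul _) (integrable_const t), integral_const_mul, hmean]
    simp
  have hup : ¬ ∀ᵐ x ∂μ, (1 + ε) * x ≤ t := by
    intro h
    have h1 : essSup (id : ℝ → ℝ) μ ≤ t / (1 + ε) := by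
      refine Filter.limsup_le_of_le ?_ ?_
      · apply Filter.IsBoundedUnder.isCoboundedUnder_le
        refine ⟨-R, ?_⟩
        rw [Filter.eventually_map]
        filter_upwards [hae] with x hx using hx.1
      · filter_upwards [h] with x hx
        rw [le_div_iff₀ hl, mul_comm]
        exact hx
    rw [← hb, le_div_iff₀ hl, mul_comm] at h1
    exact absurd ht.2 (not_lt.mpr h1)
  have hdn : ¬ ∀ᵐ x ∂μ, t ≤ (1 + ε) * x := by
    intro h
    have h1 : t / (1 + ε) ≤ essInf (id : ℝ → ℝ) μ := by
      refine Filter.le_liminf_of_le ?_ ?_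
      · apply Filter.IsBoundedUnder.isCoboundedUnder_ge
        refine ⟨R, ?_⟩
        rw [Filter.eventually_map]
        filter_upwards [hae] with x hx using hx.2
      · filter_upwards [h] with x hx
        rw [div_le_iff₀ hl, mul_comm]
        exact hx
    rw [← ha, div_le_iff₀ hl, mul_comm] at h1
    exact absurd ht.1 (not_lt.mpr h1)
  have key1 : t < ∫ x, |(1 + ε) * x - t| ∂μ := by
    by_contra! hc
    apply hup
    have h0 : ∀ x : ℝ, 0 ≤ |(1 + ε) * x - t| + ((1 + ε) * x - t) := fun x => by
      linarith [neg_abs_le ((1 + ε) * x - t)]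
    have h2 : ∫ x, (|(1 + ε) * x - t| + ((1 + ε) * x - t)) ∂μ = 0 := by
      apply le_antisymm
      · rw [integral_add hY.abs hY, hYint]; linarith
      · exact integral_nonneg h0
    rw [integral_eq_zero_iff_of_nonneg h0 (hY.abs.add hY)] at h2
    filter_upwards [h2] with x hx
    simp only [Pi.zero_apply] at hx
    linarith [abs_nonneg ((1 + ε) * x - t)]
  have key2 : -t < ∫ x, |(1 + ε) * x - t| ∂μ := by
    by_contra! hc
    apply hdn
    have h0 : ∀ x : ℝ, 0 ≤ |(1 + ε) * x - t| - ((1 + ε) * x - t) := fun x => by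
      linarith [le_abs_self ((1 + ε) * x - t)]
    have h2 : ∫ x, (|(1 + ε) * x - t| - ((1 + ε) * x - t)) ∂μ = 0 := by
      apply le_antisymm
      · rw [integral_sub hY.abs hY, hYint]; linarith
      · exact integral_nonneg h0
    rw [integral_eq_zero_iff_of_nonneg h0 (hY.abs.sub hY)] at h2
    filter_upwards [h2] with x hx
    simp only [Pi.zero_apply] at hx
    linarith [abs_nonneg ((1 + ε) * x - t)]
  have key : |t| < ∫ x, |(1 + ε) * x - t| ∂μ := abs_lt.mpr ⟨by linarith, key1⟩
  have hconv : (1 + ε) * ∫ x, |x - t| ∂μ ≤ ε * |t| + ∫ x, |(1 + ε) * x - t| ∂μ := by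
    have h3 : ∫ x, (1 + ε) * |x - t| ∂μ ≤ ∫ x, (ε * |t| + |(1 + ε) * x - t|) ∂μ := by
      refine integral_mono (hX.abs.const_mul _) ((integrable_const _).add hY.abs) ?_
      intro x
      have h4 : (1 + ε) * (x - t) = -(ε * t) + ((1 + ε) * x - t) := by ring
      calc (1 + ε) * |x - t| = |(1 + ε) * (x - t)| := by rw [abs_mul, abs_of_pos hl]
        _ ≤ |-(ε * t)| + |(1 + ε) * x - t| := by rw [h4]; exact abs_add_le _ _
        _ = ε * |t| + |(1 + ε) * x - t| := by rw [abs_neg, abs_mul, abs_of_pos hε]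
    rw [integral_const_mul, integral_add (integrable_const _) hY.abs] at h3
    simpa using h3
  have h5 := mul_lt_mul_of_pos_left key hε
  refine lt_of_mul_lt_mul_left (a := 1 + ε) ?_ hl.le
  linarith
end

section
/- Fix integers d > 1 and k ≥ 1. Let H = M_d^{sa} be the real space of self-adjoint d×d complex matrices, H_0 ⊂ H the hyperplane of trace-zero matrices, and H_1 = R·Id. Consider the action of the k-fold direct product U(d)^k of the unitary group on the real tensor power H^{⊗k}, where (U_1,…,U_k) acts by A ↦ (U_1 ⊗ ··· ⊗ U_k) A (U_1† ⊗ ··· ⊗ U_k†). Then a subspace E ⊂ H^{⊗k} is irreducible for this action if and only if E = H_{i_1} ⊗ ··· ⊗ H_{i_k} for some (i_1,…,i_k) ∈ {0,1}^k; moreover, a subspace E ⊂ H^{⊗k} is invariant if and only if it is a direct sum of subspaces of this form. -/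
open Matrix
open scoped BigOperators

noncomputable section

/-- The tensor (Kronecker) product `A₁ ⊗ ⋯ ⊗ A_k` of `k` matrices of size `d × d`,
realized as a matrix indexed by `(Fin k → Fin d)`.  Under this identification, the
real span of tensor products of Hermitian matrices is the `k`-fold real tensor power
`H^{⊗k}` of the space `H` of Hermitian `d × d` matrices. -/
def tensorK (d k : ℕ) (A : Fin k → Matrix (Fin d) (Fin d) ℂ) :
    Matrix (Fin k → Fin d) (Fin k → Fin d) ℂ :=
  Matrix.of fun p q => ∏ j, A j (p j) (q j)

/-- The action of a `k`-tuple `(U₁,…,U_k)` on `H^{⊗k}`: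
`A ↦ (U₁ ⊗ ⋯ ⊗ U_k) A (U₁ ⊗ ⋯ ⊗ U_k)†`. -/
def conjAct (d k : ℕ) (U : Fin k → Matrix (Fin d) (Fin d) ℂ)
    (A : Matrix (Fin k → Fin d) (Fin k → Fin d) ℂ) :
    Matrix (Fin k → Fin d) (Fin k → Fin d) ℂ :=
  tensorK d k U * A * (tensorK d k U)ᴴ

/-- The ambient representation space `H^{⊗k}`: the real subspace of Hermitian
matrices. -/
def hermSub (d k : ℕ) : Submodule ℝ (Matrix (Fin k → Fin d) (Fin k → Fin d) ℂ) :=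
  selfAdjoint.submodule ℝ (Matrix (Fin k → Fin d) (Fin k → Fin d) ℂ)

/-- The real span of the orbit of `x` under the action of `U(d)^k`. -/
def orbitSpan (d k : ℕ) (x : Matrix (Fin k → Fin d) (Fin k → Fin d) ℂ) :
    Submodule ℝ (Matrix (Fin k → Fin d) (Fin k → Fin d) ℂ) :=
  Submodule.span ℝ
    {y | ∃ U : Fin k → Matrix.unitaryGroup (Fin d) ℂ,
      y = conjAct d k (fun j => (U j : Matrix (Fin d) (Fin d) ℂ)) x}

/-- A (nonzero) subspace is invariant if it is preserved by the action of `U(d)^k`. -/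
def IsInvariantSub (d k : ℕ)
    (E : Submodule ℝ (Matrix (Fin k → Fin d) (Fin k → Fin d) ℂ)) : Prop :=
  E ≠ ⊥ ∧ ∀ (U : Fin k → Matrix.unitaryGroup (Fin d) ℂ), ∀ A ∈ E,
    conjAct d k (fun j => (U j : Matrix (Fin d) (Fin d) ℂ)) A ∈ E

/-- A (nonzero) subspace is irreducible if it is the span of the orbit of each of its
nonzero elements. -/
def IsIrreducibleSub (d k : ℕ)
    (E : Submodule ℝ (Matrix (Fin k → Fin d) (Fin k → Fin d) ℂ)) : Prop :=
  E ≠ ⊥ ∧ ∀ A ∈ E, A ≠ 0 → E = orbitSpan d k A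

/-- The elementary subspace `H_{i₁} ⊗ ⋯ ⊗ H_{i_k}`, where `H_1 = ℝ·Id` (for
`i_j = true`) and `H_0` is the space of trace-zero Hermitian matrices (for
`i_j = false`). -/
def elemSub (d k : ℕ) (i : Fin k → Bool) :
    Submodule ℝ (Matrix (Fin k → Fin d) (Fin k → Fin d) ℂ) :=
  Submodule.span ℝ
    {M | ∃ A : Fin k → Matrix (Fin d) (Fin d) ℂ,
      (∀ j, (A j).IsHermitian) ∧
      (∀ j, i j = true → ∃ c : ℝ, A j = (c : ℂ) • (1 : Matrix (Fin d) (Fin d) ℂ)) ∧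
      (∀ j, i j = false → (A j).trace = 0) ∧
      M = tensorK d k A}

abbrev MM (d : ℕ) := Matrix (Fin d) (Fin d) ℂ
abbrev BM (d k : ℕ) := Matrix (Fin k → Fin d) (Fin k → Fin d) ℂ

lemma tensorK_mul (d k : ℕ) (A B : Fin k → MM d) :
    tensorK d k A * tensorK d k B = tensorK d k (fun j => A j * B j) := by
  ext p q
  simp only [tensorK, Matrix.mul_apply, Matrix.of_apply]
  rw [Finset.prod_univ_sum]
  simp [Finset.prod_mul_distrib]

lemma tensorK_conjTranspose (d k : ℕ) (A : Fin k → MM d) :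
    (tensorK d k A)ᴴ = tensorK d k (fun j => (A j)ᴴ) := by
  ext p q
  simp [tensorK, Matrix.conjTranspose_apply]

lemma tensorK_trace (d k : ℕ) (A : Fin k → MM d) :
    (tensorK d k A).trace = ∏ j, (A j).trace := by
  simp only [Matrix.trace, Matrix.diag, tensorK, Matrix.of_apply]
  rw [Finset.prod_univ_sum]
  simp

lemma conjAct_tensorK (d k : ℕ) (U A : Fin k → MM d) :
    conjAct d k U (tensorK d k A) = tensorK d k (fun j => U j * A j * (U j)ᴴ) := by
  simp [conjAct, tensorK_conjTranspose, tensorK_mul]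

/-- conjugation as a linear map -/
def adL (d : ℕ) (U : MM d) : Module.End ℂ (MM d) :=
  LinearMap.mulLeft ℂ U * LinearMap.mulRight ℂ Uᴴ

lemma adL_apply (d : ℕ) (U X : MM d) : adL d U X = U * X * Uᴴ := by
  simp [adL, mul_assoc]

/-- rank one operator -/
def rk (d : ℕ) (B C : MM d) : Module.End ℂ (MM d) :=
  ((Matrix.traceLinearMap (Fin d) ℂ ℂ).comp (LinearMap.mulLeft ℂ B)).smulRight C

lemma rk_apply (d : ℕ) (B C X : MM d) : rk d B C X = (B * X).trace • C := by
  simp [rk]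

/-- tensor product of operators -/
def tApp (d k : ℕ) (T : Fin k → Module.End ℂ (MM d)) (X : BM d k) : BM d k :=
  Matrix.of fun P Q => ∑ R : Fin k → Fin d, ∑ S : Fin k → Fin d,
    (∏ j, (T j (Matrix.single (R j) (S j) 1)) (P j) (Q j)) * X R S

lemma tApp_add (d k : ℕ) (T : Fin k → Module.End ℂ (MM d)) (X : BM d k) (j : Fin k)
    (a b : Module.End ℂ (MM d)) :
    tApp d k (Function.update T j (a + b)) X =
      tApp d k (Function.update T j a) X + tApp d k (Function.update T j b) X := by
  have key : ∀ (c : Module.End ℂ (MM d)) (P Q R S : Fin k → Fin d),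
      (∏ l, (Function.update T j c l (Matrix.single (R l) (S l) 1)) (P l) (Q l)) =
      (c (Matrix.single (R j) (S j) 1)) (P j) (Q j) *
        ∏ l ∈ Finset.univ.erase j, (T l (Matrix.single (R l) (S l) 1)) (P l) (Q l) := by
    intro c P Q R S
    rw [← Finset.mul_prod_erase _ _ (Finset.mem_univ j)]
    congr 1
    · simp
    · apply Finset.prod_congr rfl
      intro l hl
      rw [Function.update_of_ne (Finset.ne_of_mem_erase hl)]
  ext P Q
  simp only [tApp, Matrix.of_apply, Matrix.add_apply, key, LinearMap.add_apply, add_mul,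
    Finset.sum_add_distrib]

lemma tApp_smul (d k : ℕ) (T : Fin k → Module.End ℂ (MM d)) (X : BM d k) (j : Fin k)
    (r : ℝ) (a : Module.End ℂ (MM d)) :
    tApp d k (Function.update T j (r • a)) X = r • tApp d k (Function.update T j a) X := by
  have key : ∀ (c : Module.End ℂ (MM d)) (P Q R S : Fin k → Fin d),
      (∏ l, (Function.update T j c l (Matrix.single (R l) (S l) 1)) (P l) (Q l)) =
      (c (Matrix.single (R j) (S j) 1)) (P j) (Q j) *
        ∏ l ∈ Finset.univ.erase j, (T l (Matrix.single (R l) (S l) 1)) (P l) (Q l) := by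
    intro c P Q R S
    rw [← Finset.mul_prod_erase _ _ (Finset.mem_univ j)]
    congr 1
    · simp
    · apply Finset.prod_congr rfl
      intro l hl
      rw [Function.update_of_ne (Finset.ne_of_mem_erase hl)]
  ext P Q
  simp only [tApp, Matrix.of_apply, Matrix.smul_apply, key, LinearMap.smul_apply,
    Finset.smul_sum, smul_mul_assoc]

lemma tApp_zero (d k : ℕ) (T : Fin k → Module.End ℂ (MM d)) (X : BM d k) (j : Fin k) :
    tApp d k (Function.update T j 0) X = 0 := by
  have := tApp_smul d k T X j 0 0
  simpa using this

lemma tApp_span (d k : ℕ) (s : Set (Module.End ℂ (MM d))) (X : BM d k)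
    (F : Submodule ℝ (BM d k))
    (h : ∀ T : Fin k → Module.End ℂ (MM d), (∀ j, T j ∈ s) → tApp d k T X ∈ F)
    (T : Fin k → Module.End ℂ (MM d)) (hT : ∀ j, T j ∈ Submodule.span ℝ s) :
    tApp d k T X ∈ F := by
  have main : ∀ t : Finset (Fin k), ∀ T : Fin k → Module.End ℂ (MM d),
      (∀ j ∈ t, T j ∈ Submodule.span ℝ s) → (∀ j ∉ t, T j ∈ s) → tApp d k T X ∈ F := by
    intro t
    induction t using Finset.induction_on with
    | empty => intro T _ h2; exact h T (fun j => h2 j (by simp))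
    | insert a t ha ih =>
      intro T h1 h2
      have : ∀ c ∈ Submodule.span ℝ s, tApp d k (Function.update T a c) X ∈ F := by
        intro c hc
        induction hc using Submodule.span_induction with
        | mem x hx =>
          apply ih
          · intro j hj
            have : j ≠ a := by rintro rfl; exact ha hj
            rw [Function.update_of_ne this]
            exact h1 j (by simp [hj])
          · intro j hj
            by_cases hja : j = a
            · subst hja; simpa using hx
            · rw [Function.update_of_ne hja]
              exact h2 j (by simp [hj, hja])
        | zero => rw [tApp_zero]; exact F.zero_mem
        | add x y _ _ hx hy => rw [tApp_add]; exact F.add_mem hx hy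
        | smul r x _ hx => rw [tApp_smul]; exact F.smul_mem r hx
      have h3 := this (T a) (h1 a (by simp))
      simpa using h3
  exact main Finset.univ T (fun j _ => hT j) (fun j hj => absurd (Finset.mem_univ j) hj)

lemma tApp_one (d k : ℕ) (X : BM d k) : tApp d k (fun _ => 1) X = X := by
  ext P Q
  simp only [tApp, Matrix.of_apply, Module.End.one_apply]
  rw [Finset.sum_eq_single P, Finset.sum_eq_single Q]
  · simp
  · intro S _ hS
    obtain ⟨j, hj⟩ := Function.ne_iff.mp hS
    rw [Finset.prod_eq_zero (Finset.mem_univ j), zero_mul]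
    simp [Matrix.single_apply, hj]
  · simp
  · intro R _ hR
    obtain ⟨j, hj⟩ := Function.ne_iff.mp hR
    apply Finset.sum_eq_zero
    intro S _
    rw [Finset.prod_eq_zero (Finset.mem_univ j), zero_mul]
    simp [Matrix.single_apply, hj]
  · simp

lemma tApp_adL (d k : ℕ) (U : Fin k → MM d) (X : BM d k) :
    tApp d k (fun j => adL d (U j)) X = conjAct d k U X := by
  have h1 : ∀ (j : Fin k) (r s p q : Fin d),
      adL d (U j) (Matrix.single r s 1) p q = U j p r * star (U j q s) := by
    intro j r s p q
    rw [adL_apply, Matrix.mul_apply]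
    rw [Finset.sum_eq_single s]
    · simp [Matrix.conjTranspose_apply]
    · intro b _ hb
      simp [Matrix.mul_single_apply_of_ne, hb]
    · simp
  ext P Q
  simp only [tApp, Matrix.of_apply, conjAct, Matrix.mul_apply, h1, tensorK,
    Matrix.conjTranspose_apply, Finset.prod_mul_distrib, Finset.sum_mul, star_prod]
  rw [Finset.sum_comm]
  apply Finset.sum_congr rfl
  intro R _
  apply Finset.sum_congr rfl
  intro S _
  ring

lemma tApp_rk (d k : ℕ) (B C : Fin k → MM d) (X : BM d k) :
    tApp d k (fun j => rk d (B j) (C j)) X = (tensorK d k B * X).trace • tensorK d k C := by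
  have h1 : ∀ (j : Fin k) (r s p q : Fin d),
      rk d (B j) (C j) (Matrix.single r s 1) p q = B j s r * C j p q := by
    intro j r s p q
    rw [rk_apply]
    simp [Matrix.trace_mul_single]
  ext P Q
  simp only [tApp, Matrix.of_apply, Matrix.trace, Matrix.diag, Matrix.mul_apply, h1, tensorK,
    Finset.prod_mul_distrib, Finset.sum_mul, Matrix.smul_apply, smul_eq_mul]
  rw [Finset.sum_comm]
  apply Finset.sum_congr rfl
  intro R _
  apply Finset.sum_congr rfl
  intro S _
  ring

/-- span of the adjoint operators -/
def adAlg (d : ℕ) : Submodule ℝ (Module.End ℂ (MM d)) :=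
  Submodule.span ℝ {T | ∃ U : Matrix.unitaryGroup (Fin d) ℂ, T = adL d (U : MM d)}

lemma adL_mem (d : ℕ) (U : MM d) (hU : U ∈ Matrix.unitaryGroup (Fin d) ℂ) :
    adL d U ∈ adAlg d := Submodule.subset_span ⟨⟨U, hU⟩, rfl⟩

lemma adL_mul (d : ℕ) (U V : MM d) : adL d U * adL d V = adL d (U * V) := by
  ext1 X
  simp [adL_apply, mul_assoc]

lemma adAlg_one (d : ℕ) : 1 ∈ adAlg d := by
  have := adL_mem d 1 (one_mem _)
  convert this using 1
  ext1 X
  simp [adL_apply]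

lemma adAlg_mul (d : ℕ) {S T : Module.End ℂ (MM d)} (hS : S ∈ adAlg d) (hT : T ∈ adAlg d) :
    S * T ∈ adAlg d := by
  have h := Submodule.mul_mem_mul hS hT
  unfold adAlg at h
  rw [Submodule.span_mul_span] at h
  refine Submodule.span_mono ?_ h
  rintro _ ⟨_, ⟨U, rfl⟩, _, ⟨V, rfl⟩, rfl⟩
  exact ⟨U * V, by simp [adL_mul]⟩

lemma perm_unitary (d : ℕ) (σ : Equiv.Perm (Fin d)) :
    (σ.permMatrix ℂ) ∈ Matrix.unitaryGroup (Fin d) ℂ := by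
  rw [Matrix.mem_unitaryGroup_iff, Matrix.star_eq_conjTranspose, Matrix.conjTranspose_permMatrix,
    ← Matrix.permMatrix_mul]
  simp

lemma adL_perm (d : ℕ) (σ : Equiv.Perm (Fin d)) (X : MM d) (p q : Fin d) :
    adL d (σ.permMatrix ℂ) X p q = X (σ p) (σ q) := by
  rw [adL_apply, Matrix.conjTranspose_permMatrix]
  rw [Equiv.Perm.permMatrix, Equiv.Perm.permMatrix, PEquiv.toMatrix_toPEquiv_mul,
    PEquiv.mul_toMatrix_toPEquiv]
  rfl

lemma exists_diag (d : ℕ) (s : Finset (Fin d)) : ∃ T ∈ adAlg d, ∀ X p q,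
    T X p q = if p ≠ q ∧ (p ∈ s ∨ q ∈ s) then 0 else X p q := by
  induction s using Finset.induction_on with
  | empty => exact ⟨1, adAlg_one d, by simp⟩
  | insert a s ha ih =>
    obtain ⟨T, hT, h⟩ := ih
    let f : Fin d → ℂ := fun p => if p = a then -1 else 1
    have hf : ∀ p, star (f p) = f p := by intro p; simp only [f]; split_ifs <;> simp
    have hU : Matrix.diagonal f ∈ Matrix.unitaryGroup (Fin d) ℂ := by
      rw [Matrix.mem_unitaryGroup_iff, Matrix.star_eq_conjTranspose,
        Matrix.diagonal_conjTranspose, Matrix.diagonal_mul_diagonal, ← Matrix.diagonal_one]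
      congr 1
      ext p
      simp only [Pi.star_apply, hf]
      simp only [f]; split_ifs <;> simp
    refine ⟨((1/2 : ℝ) • (1 + adL d (Matrix.diagonal f))) * T,
      adAlg_mul d (Submodule.smul_mem _ _ (Submodule.add_mem _ (adAlg_one d) (adL_mem d _ hU))) hT,
      ?_⟩
    intro X p q
    have : adL d (Matrix.diagonal f) (T X) p q = f p * T X p q * f q := by
      rw [adL_apply, Matrix.diagonal_conjTranspose, Matrix.mul_diagonal, Matrix.diagonal_mul,
        Pi.star_apply, hf]
    simp only [Module.End.mul_apply, LinearMap.smul_apply, LinearMap.add_apply, Matrix.smul_apply,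
      Matrix.add_apply, Module.End.one_apply, this, h, f]
    by_cases hpq : p = q
    · subst hpq
      split_ifs <;> simp_all <;> ring
    · by_cases hp : p = a <;> by_cases hq : q = a <;> by_cases hps : p ∈ s <;>
        by_cases hqs : q ∈ s <;> simp_all <;> ring

lemma rk_one_one (d : ℕ) (hd : 1 < d) : rk d 1 1 ∈ adAlg d := by
  have : NeZero d := ⟨by omega⟩
  obtain ⟨T, hT, h⟩ := exists_diag d Finset.univ
  have : rk d 1 1 = ∑ m : Fin d, adL d ((Equiv.addRight m).permMatrix ℂ) * T := by
    apply LinearMap.ext; intro X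
    ext p q
    rw [rk_apply]
    simp only [LinearMap.sum_apply, Matrix.sum_apply, Module.End.mul_apply, adL_perm, h]
    by_cases hpq : p = q
    · subst hpq
      simp only [Equiv.coe_addRight, one_mul, Matrix.smul_apply, Matrix.one_apply_eq, smul_eq_mul, mul_one, ne_eq, not_true,
        false_and, if_false, Matrix.trace, Matrix.diag]
      exact (Equiv.sum_comp (Equiv.addLeft p) (fun m => X m m)).symm
    · simp [hpq]
  rw [this]
  exact Submodule.sum_mem _ (fun m _ => adAlg_mul d (adL_mem d _ (perm_unitary d _)) hT)

/-- the basic traceless diagonal matrix -/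
def Zm (d : ℕ) (a b : Fin d) : MM d := Matrix.single a a 1 - Matrix.single b b 1

lemma rk_Z (d : ℕ) (a b : Fin d) (hab : a ≠ b) : rk d (Zm d a b) (Zm d a b) ∈ adAlg d := by
  obtain ⟨T, hT, h⟩ := exists_diag d Finset.univ
  have : rk d (Zm d a b) (Zm d a b) = (1 - adL d ((Equiv.swap a b).permMatrix ℂ)) * T := by
    apply LinearMap.ext; intro X
    ext p q
    rw [rk_apply]
    have htr : (Zm d a b * X).trace = X a a - X b b := by
      simp [Zm, sub_mul, Matrix.trace_sub, Matrix.trace_single_mul]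
    rw [htr]
    unfold Zm
    simp only [Module.End.mul_apply, LinearMap.sub_apply, Module.End.one_apply,
      Matrix.sub_apply, adL_perm, h, Matrix.smul_apply, Matrix.single_apply]
    by_cases hpq : p = q
    · subst hpq
      by_cases hpa : p = a
      · subst hpa; simp [hab, hab.symm]
      · by_cases hpb : p = b
        · subst hpb; simp [hab]
        · simp [Equiv.swap_apply_of_ne_of_ne hpa hpb, Ne.symm hpa, Ne.symm hpb]
    · simp [hpq]
      grind
  rw [this]
  exact adAlg_mul d (Submodule.sub_mem _ (adAlg_one d) (adL_mem d _ (perm_unitary d _))) hT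

lemma adL_rk_adL (d : ℕ) (U V B C : MM d) :
    adL d V * rk d B C * adL d Uᴴ = rk d (U * B * Uᴴ) (V * C * Vᴴ) := by
  ext1 X
  simp only [Module.End.mul_apply, rk_apply, map_smul, adL_apply, Matrix.conjTranspose_conjTranspose]
  congr 1
  rw [← mul_assoc, ← mul_assoc, Matrix.trace_mul_comm, ← mul_assoc, ← mul_assoc]

/-- traceless Hermitian matrices lie in the span of the orbit of Z -/
lemma traceless_mem (d : ℕ) (a b : Fin d) (hab : a ≠ b) (C : MM d) (hC : C.IsHermitian)
    (htr : C.trace = 0) :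
    C ∈ Submodule.span ℝ {M | ∃ U ∈ Matrix.unitaryGroup (Fin d) ℂ,
      M = U * Zm d a b * Uᴴ} := by
  let V : MM d := hC.eigenvectorUnitary
  have hV : V ∈ Matrix.unitaryGroup (Fin d) ℂ := hC.eigenvectorUnitary.2
  have hsum : ∑ p, hC.eigenvalues p = 0 := by
    have := hC.trace_eq_sum_eigenvalues
    rw [htr] at this
    have h2 : ((∑ p, hC.eigenvalues p : ℝ) : ℂ) = 0 := by
      push_cast; exact this.symm
    exact_mod_cast h2
  have hspec : C = ∑ p, hC.eigenvalues p • (V * Zm d p b * Vᴴ) := by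
    have h1 : (Matrix.diagonal (fun p => (hC.eigenvalues p : ℂ)) : MM d) =
        ∑ p, hC.eigenvalues p • Zm d p b := by
      have : ∑ p, hC.eigenvalues p • Zm d p b =
          ∑ p, hC.eigenvalues p • (Matrix.single p p 1 : MM d) := by
        simp only [Zm, smul_sub, Finset.sum_sub_distrib, ← Finset.sum_smul, hsum, zero_smul,
          sub_zero]
      rw [this]
      ext p q
      simp only [Matrix.sum_apply, Matrix.single_apply, Matrix.diagonal_apply, Matrix.smul_apply]
      by_cases hpq : p = q
      · subst hpq; simp
      · rw [if_neg hpq, Finset.sum_eq_zero]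
        intro x _
        rw [if_neg (fun h => hpq (h.1.symm.trans h.2)), smul_zero]
    have h2 : C = V * Matrix.diagonal (fun p => (hC.eigenvalues p : ℂ)) * Vᴴ := by
      have := hC.spectral_theorem
      rw [Unitary.conjStarAlgAut_apply] at this
      exact this
    conv_lhs => rw [h2, h1]
    simp [Finset.mul_sum, Finset.sum_mul]
  rw [hspec]
  apply Submodule.sum_mem
  intro p _
  apply Submodule.smul_mem
  by_cases hp : p = b
  · subst hp
    simp [Zm]
  · obtain ⟨σ, h1, h2⟩ : ∃ σ : Equiv.Perm (Fin d), σ p = a ∧ σ b = b := by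
      refine ⟨Equiv.swap p a, by simp, Equiv.swap_apply_of_ne_of_ne (Ne.symm hp) (Ne.symm hab)⟩
    apply Submodule.subset_span
    refine ⟨V * σ.permMatrix ℂ, mul_mem hV (perm_unitary d σ), ?_⟩
    have : Zm d p b = adL d (σ.permMatrix ℂ) (Zm d a b) := by
      ext x y
      rw [adL_perm]
      have e1 : ∀ x, a = σ x ↔ p = x := by intro x; rw [← h1]; simp
      have e2 : ∀ x, b = σ x ↔ b = x := by intro x; nth_rw 1 [← h2]; simp
      simp [Zm, Matrix.single_apply, e1, e2]
    rw [this, adL_apply]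
    simp [mul_assoc]

lemma rk_traceless (d : ℕ) (hd : 1 < d) (B C : MM d) (hB : B.IsHermitian)
    (hC : C.IsHermitian) (hB0 : B.trace = 0) (hC0 : C.trace = 0) : rk d B C ∈ adAlg d := by
  let a : Fin d := ⟨0, by omega⟩
  let b : Fin d := ⟨1, hd⟩
  have hab : a ≠ b := by simp [a, b]
  have add_l : ∀ B B' C : MM d, rk d (B + B') C = rk d B C + rk d B' C := by
    intro B B' C; ext1 X; simp [rk_apply, add_mul, add_smul]
  have add_r : ∀ B C C' : MM d, rk d B (C + C') = rk d B C + rk d B C' := by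
    intro B B' C; ext1 X; simp [rk_apply]
  have smul_l : ∀ (r : ℝ) (B C : MM d), rk d (r • B) C = r • rk d B C := by
    intro r B C; ext1 X; simp only [rk_apply, LinearMap.smul_apply, smul_mul_assoc, Matrix.trace_smul, smul_assoc]
  have smul_r : ∀ (r : ℝ) (B C : MM d), rk d B (r • C) = r • rk d B C := by
    intro r B C; ext1 X; simp only [rk_apply, LinearMap.smul_apply]; exact smul_comm _ _ _
  have hB' := traceless_mem d a b hab B hB hB0
  have hC' := traceless_mem d a b hab C hC hC0
  clear hB hC hB0 hC0
  induction hB' using Submodule.span_induction with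
  | zero => have := smul_l 0 0 C; simp at this; rw [this]; exact Submodule.zero_mem _
  | add x y _ _ hx hy => rw [add_l]; exact Submodule.add_mem _ hx hy
  | smul r x _ hx => rw [smul_l]; exact Submodule.smul_mem _ _ hx
  | mem x hx =>
    obtain ⟨U, hU, rfl⟩ := hx
    induction hC' using Submodule.span_induction with
    | zero => have := smul_r 0 (U * Zm d a b * Uᴴ) 0; simp at this; rw [this]; exact Submodule.zero_mem _
    | add x y _ _ hx hy => rw [add_r]; exact Submodule.add_mem _ hx hy
    | smul r x _ hx => rw [smul_r]; exact Submodule.smul_mem _ _ hx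
    | mem x hx =>
      obtain ⟨V, hV, rfl⟩ := hx
      rw [← adL_rk_adL]
      exact adAlg_mul d (adAlg_mul d (adL_mem d V hV) (rk_Z d a b hab))
        (adL_mem d _ (Unitary.star_mem hU))

/-- membership of a matrix in the factor `H_0` or `H_1` (generators) -/
def IsType (d : ℕ) (t : Bool) (A : MM d) : Prop :=
  A.IsHermitian ∧ (t = true → ∃ c : ℝ, A = (c : ℂ) • (1 : MM d)) ∧ (t = false → A.trace = 0)

/-- projection on the traceless part -/
def P0 (d : ℕ) : Module.End ℂ (MM d) := 1 - (1 / d : ℝ) • rk d 1 1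

lemma P0_apply (d : ℕ) (X : MM d) : P0 d X = X - (X.trace / d) • (1 : MM d) := by
  ext p q
  simp [P0, rk_apply]
  ring

lemma P0_trace (d : ℕ) (hd : 1 < d) (X : MM d) : (P0 d X).trace = 0 := by
  have : (d : ℂ) ≠ 0 := by exact_mod_cast (by omega : d ≠ 0)
  simp [P0_apply, this]

lemma P0_herm (d : ℕ) (X : MM d) (hX : X.IsHermitian) : (P0 d X).IsHermitian := by
  have h : star X.trace = X.trace := by
    rw [← Matrix.trace_conjTranspose, hX.eq]
  rw [P0_apply]
  apply hX.sub
  rw [Matrix.IsHermitian, Matrix.conjTranspose_smul, star_div₀, h]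
  simp

lemma P0_rk_P0 (d : ℕ) (B C : MM d) : P0 d * rk d B C * P0 d = rk d (P0 d B) (P0 d C) := by
  ext1 X
  simp only [Module.End.mul_apply, rk_apply, map_smul]
  congr 1
  simp [P0_apply, mul_sub, sub_mul]
  ring

lemma four_id (d : ℕ) : (4 : ℝ) • (1 : Module.End ℂ (MM d)) = ∑ p : Fin d, ∑ q : Fin d,
    (rk d (Matrix.single p q 1 + Matrix.single q p 1) (Matrix.single p q 1 + Matrix.single q p 1)
    + rk d (Complex.I • (Matrix.single p q 1 - Matrix.single q p 1))
       (Complex.I • (Matrix.single p q 1 - Matrix.single q p 1))) := by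
  apply LinearMap.ext; intro X
  have key : ∀ p q : Fin d, (rk d (Matrix.single p q 1 + Matrix.single q p 1)
      (Matrix.single p q 1 + Matrix.single q p 1)
    + rk d (Complex.I • (Matrix.single p q 1 - Matrix.single q p 1))
       (Complex.I • (Matrix.single p q 1 - Matrix.single q p 1))) X =
      Matrix.single p q (2 * X p q) + Matrix.single q p (2 * X q p) := by
    intro p q
    simp only [LinearMap.add_apply, rk_apply, add_mul, sub_mul, smul_mul_assoc, Matrix.trace_add,
      Matrix.trace_sub, Matrix.trace_smul, Matrix.trace_single_mul]
    ext x y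
    simp only [Matrix.add_apply, Matrix.sub_apply, Matrix.smul_apply, smul_eq_mul,
      Matrix.single_apply]
    have hI : Complex.I * Complex.I = -1 := Complex.I_mul_I
    split_ifs
    · linear_combination (0 : ℂ)
    · linear_combination (X q p - X p q) * hI
    · linear_combination (X p q - X q p) * hI
    · ring
  simp only [LinearMap.sum_apply, key]
  simp only [Finset.sum_add_distrib]
  have h2 := Matrix.matrix_eq_sum_single (Matrix.of fun p q => 2 * X p q)
  simp only [Matrix.of_apply] at h2
  rw [Finset.sum_comm (f := fun p q => Matrix.single q p (2 * X q p)), ← h2]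
  ext p q
  simp
  ring

lemma one_mem_span (d : ℕ) (hd : 1 < d) : (1 : Module.End ℂ (MM d)) ∈
    Submodule.span ℝ {T | ∃ t B C, IsType d t B ∧ IsType d t C ∧ T = rk d B C} := by
  set s : Set (Module.End ℂ (MM d)) := {T | ∃ t B C, IsType d t B ∧ IsType d t C ∧ T = rk d B C}
  have hd0 : (d : ℂ) ≠ 0 := by exact_mod_cast (by omega : d ≠ 0)
  have h11 : rk d 1 1 ∈ s := by
    refine ⟨true, 1, 1, ?_, ?_, rfl⟩ <;>
    exact ⟨Matrix.isHermitian_one, fun _ => ⟨1, by simp⟩, by simp⟩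
  have hP : ∀ B : MM d, B.IsHermitian → P0 d * rk d B B * P0 d ∈ Submodule.span ℝ s := by
    intro B hB
    rw [P0_rk_P0]
    apply Submodule.subset_span
    refine ⟨false, P0 d B, P0 d B, ?_, ?_, rfl⟩ <;>
    exact ⟨P0_herm d B hB, by simp, fun _ => P0_trace d hd B⟩
  have hP2 : P0 d * P0 d = P0 d := by
    ext1 X
    rw [Module.End.mul_apply, P0_apply d (P0 d X), P0_trace d hd]
    simp
  have h1 : (1 : Module.End ℂ (MM d)) = (1 / d : ℝ) • rk d 1 1 + P0 d := by simp [P0]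
  have h4 : (4 : ℝ) • P0 d ∈ Submodule.span ℝ s := by
    have : (4 : ℝ) • P0 d = P0 d * ((4 : ℝ) • (1 : Module.End ℂ (MM d))) * P0 d := by
      simp [hP2]
    rw [this, four_id]
    simp only [Finset.mul_sum, Finset.sum_mul, mul_add, add_mul]
    refine Submodule.sum_mem _ fun p _ => Submodule.sum_mem _ fun q _ =>
      Submodule.add_mem _ (hP _ ?_) (hP _ ?_)
    · simp [Matrix.IsHermitian, Matrix.conjTranspose_single, add_comm]
    · simp [Matrix.IsHermitian, Matrix.conjTranspose_single, Matrix.conjTranspose_smul, ← smul_neg]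
  rw [h1]
  refine Submodule.add_mem _ (Submodule.smul_mem _ _ (Submodule.subset_span h11)) ?_
  have := Submodule.smul_mem _ (1/4 : ℝ) h4
  rwa [smul_smul, show (1/4 : ℝ) * 4 = 1 by norm_num, one_smul] at this

lemma rk_type_mem (d : ℕ) (hd : 1 < d) (t : Bool) (B C : MM d) (hB : IsType d t B)
    (hC : IsType d t C) : rk d B C ∈ adAlg d := by
  cases t with
  | false => exact rk_traceless d hd B C hB.1 hC.1 (hB.2.2 rfl) (hC.2.2 rfl)
  | true =>
    obtain ⟨b, rfl⟩ := hB.2.1 rfl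
    obtain ⟨c, rfl⟩ := hC.2.1 rfl
    have : rk d ((b : ℂ) • 1) ((c : ℂ) • 1) = (b * c : ℝ) • rk d 1 1 := by
      ext1 X
      ext p q
      simp [rk_apply]
      ring
    rw [this]
    exact Submodule.smul_mem _ _ (rk_one_one d hd)

lemma tensorK_mem (d k : ℕ) (i : Fin k → Bool) (A : Fin k → MM d)
    (h : ∀ j, IsType d (i j) (A j)) : tensorK d k A ∈ elemSub d k i :=
  Submodule.subset_span ⟨A, fun j => (h j).1, fun j => (h j).2.1, fun j => (h j).2.2, rfl⟩

lemma elemSub_le (d k : ℕ) (i : Fin k → Bool) (F : Submodule ℝ (BM d k))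
    (h : ∀ A : Fin k → MM d, (∀ j, IsType d (i j) (A j)) → tensorK d k A ∈ F) :
    elemSub d k i ≤ F := by
  apply Submodule.span_le.mpr
  rintro _ ⟨A, h1, h2, h3, rfl⟩
  exact h A fun j => ⟨h1 j, h2 j, h3 j⟩

lemma tensorK_herm (d k : ℕ) (A : Fin k → MM d) (h : ∀ j, (A j).IsHermitian) :
    (tensorK d k A).IsHermitian := by
  rw [Matrix.IsHermitian, tensorK_conjTranspose]
  congr 1; ext1 j; exact h j

lemma mem_hermSub (d k : ℕ) (X : BM d k) : X ∈ hermSub d k ↔ X.IsHermitian := Iff.rfl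

lemma elemSub_le_herm (d k : ℕ) (i : Fin k → Bool) : elemSub d k i ≤ hermSub d k :=
  elemSub_le d k i _ fun A h => tensorK_herm d k A fun j => (h j).1

lemma trace_real (d k : ℕ) (X Y : BM d k) (hX : X.IsHermitian) (hY : Y.IsHermitian) :
    ∃ r : ℝ, (X * Y).trace = (r : ℂ) := by
  have : star (X * Y).trace = (X * Y).trace := by
    rw [← Matrix.trace_conjTranspose, Matrix.conjTranspose_mul, hX.eq, hY.eq, Matrix.trace_mul_comm]
  exact ⟨_, (Complex.conj_eq_iff_re.mp this).symm⟩

lemma conjAct_elem (d k : ℕ) (i : Fin k → Bool) (U : Fin k → Matrix.unitaryGroup (Fin d) ℂ)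
    (A : BM d k) (hA : A ∈ elemSub d k i) :
    conjAct d k (fun j => (U j : MM d)) A ∈ elemSub d k i := by
  let L : BM d k →ₗ[ℝ] BM d k :=
    { toFun := conjAct d k (fun j => (U j : MM d))
      map_add' := by intro x y; simp [conjAct, mul_add, add_mul]
      map_smul' := by intro r x; simp [conjAct] }
  have : elemSub d k i ≤ (elemSub d k i).comap L := by
    apply elemSub_le
    intro A hA
    change conjAct d k _ _ ∈ elemSub d k i
    rw [conjAct_tensorK]
    apply tensorK_mem
    intro j
    have hU : (U j : MM d) * (U j : MM d)ᴴ = 1 := Matrix.mem_unitaryGroup_iff.mp (U j).2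
    have hU' : (U j : MM d)ᴴ * (U j : MM d) = 1 := Matrix.mem_unitaryGroup_iff'.mp (U j).2
    refine ⟨Matrix.isHermitian_mul_mul_conjTranspose _ (hA j).1, fun h => ?_, fun h => ?_⟩
    · obtain ⟨c, hc⟩ := (hA j).2.1 h
      exact ⟨c, by rw [hc]; simp [hU]⟩
    · rw [Matrix.trace_mul_comm, ← mul_assoc, hU', one_mul, (hA j).2.2 h]
  exact this hA

/-- a standard nonzero element of each type -/
def stdEl (d : ℕ) (hd : 1 < d) (t : Bool) : MM d :=
  if t then 1 else Zm d ⟨0, by omega⟩ ⟨1, hd⟩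

lemma stdEl_type (d : ℕ) (hd : 1 < d) (t : Bool) : IsType d t (stdEl d hd t) := by
  cases t with
  | true => exact ⟨by simp [stdEl], fun _ => ⟨1, by simp [stdEl]⟩, by simp⟩
  | false =>
    refine ⟨?_, by simp, fun _ => by simp [stdEl, Zm]⟩
    simp [stdEl, Zm, Matrix.IsHermitian, Matrix.conjTranspose_single]

lemma stdEl_sq (d : ℕ) (hd : 1 < d) (t : Bool) :
    (stdEl d hd t * stdEl d hd t).trace ≠ 0 := by
  cases t with
  | true => simp [stdEl]; omega
  | false =>
    simp [stdEl, Zm, mul_sub, sub_mul, Matrix.trace_sub, Matrix.single_mul_single_of_ne]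
    try norm_num

lemma type_orth (d : ℕ) (t u : Bool) (htu : t ≠ u) (A B : MM d) (hA : IsType d t A)
    (hB : IsType d u B) : (A * B).trace = 0 := by
  cases t <;> cases u <;> simp at htu
  · obtain ⟨c, rfl⟩ := hB.2.1 rfl
    simp [hA.2.2 rfl]
  · obtain ⟨c, rfl⟩ := hA.2.1 rfl
    simp [hB.2.2 rfl]

lemma std_sq (d k : ℕ) (hd : 1 < d) (i : Fin k → Bool) :
    (tensorK d k (fun j => stdEl d hd (i j)) * tensorK d k (fun j => stdEl d hd (i j))).trace
      ≠ 0 := by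
  rw [tensorK_mul, tensorK_trace, Finset.prod_ne_zero_iff]
  exact fun j _ => stdEl_sq d hd (i j)

lemma std_ne (d k : ℕ) (hd : 1 < d) (i : Fin k → Bool) :
    tensorK d k (fun j => stdEl d hd (i j)) ≠ 0 := by
  intro h
  apply std_sq d k hd i
  simp [h]

lemma std_mem (d k : ℕ) (hd : 1 < d) (i : Fin k → Bool) :
    tensorK d k (fun j => stdEl d hd (i j)) ∈ elemSub d k i :=
  tensorK_mem d k i _ fun j => stdEl_type d hd (i j)

lemma elemSub_ne_bot (d k : ℕ) (hd : 1 < d) (i : Fin k → Bool) : elemSub d k i ≠ ⊥ := by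
  intro h
  have := std_mem d k hd i
  rw [h] at this
  exact std_ne d k hd i (by simpa using this)

lemma elemSub_inj (d k : ℕ) (hd : 1 < d) (i i' : Fin k → Bool)
    (h : elemSub d k i' ≤ elemSub d k i) : i' = i := by
  by_contra hne
  obtain ⟨j, hj⟩ := Function.ne_iff.mp hne
  set Z := tensorK d k (fun j => stdEl d hd (i' j)) with hZ
  let L : BM d k →ₗ[ℝ] ℂ :=
    { toFun := fun X => (Z * X).trace
      map_add' := by intro x y; simp [mul_add]
      map_smul' := by intro r x; simp }
  have : elemSub d k i ≤ LinearMap.ker L := by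
    apply elemSub_le
    intro A hA
    change (Z * _).trace = 0
    rw [hZ, tensorK_mul, tensorK_trace]
    exact Finset.prod_eq_zero (Finset.mem_univ j)
      (type_orth d _ _ hj _ _ (stdEl_type d hd (i' j)) (hA j))
  exact std_sq d k hd i' (this (h (std_mem d k hd i')))

lemma invariant_eq (d k : ℕ) (hd : 1 < d) (E : Submodule ℝ (BM d k)) (hE : E ≤ hermSub d k)
    (hinv : ∀ (U : Fin k → Matrix.unitaryGroup (Fin d) ℂ), ∀ A ∈ E,
      conjAct d k (fun j => (U j : MM d)) A ∈ E) :
    E = ⨆ i ∈ {i | elemSub d k i ≤ E}, elemSub d k i := by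
  have hclosed : ∀ X ∈ E, ∀ T : Fin k → Module.End ℂ (MM d), (∀ j, T j ∈ adAlg d) →
      tApp d k T X ∈ E := by
    intro X hX T hT
    apply tApp_span d k _ X E _ T hT
    intro T hT
    choose U hU using hT
    have : T = fun j => adL d (U j : MM d) := funext hU
    rw [this, tApp_adL]
    exact hinv U X hX
  have hsm : ∀ (r : ℝ) (Y : BM d k), (r : ℂ) • Y = r • Y := by
    intro r Y; ext; simp
  apply le_antisymm
  · intro X hX
    rw [← tApp_one d k X]
    apply tApp_span d k _ X _ _ _ (fun _ => one_mem_span d hd)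
    intro T hT
    choose i B C hB hC hTe using hT
    have : T = fun j => rk d (B j) (C j) := funext hTe
    obtain ⟨r, hr⟩ := trace_real d k (tensorK d k B) X (tensorK_herm d k B fun j => (hB j).1)
      (hE hX)
    rw [this, tApp_rk, hr, hsm]
    by_cases hr0 : r = 0
    · simp [hr0]
    · have hi : elemSub d k i ≤ E := by
        apply elemSub_le
        intro C' hC'
        have h1 := hclosed X hX (fun j => rk d (B j) (C' j))
          (fun j => rk_type_mem d hd (i j) _ _ (hB j) (hC' j))
        rw [tApp_rk, hr, hsm] at h1
        exact (Submodule.smul_mem_iff _ hr0).mp h1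
      apply Submodule.smul_mem
      have h2 : elemSub d k i ≤ ⨆ i ∈ {i | elemSub d k i ≤ E}, elemSub d k i :=
        le_iSup₂_of_le i hi le_rfl
      exact h2 (tensorK_mem d k i C hC)
  · exact iSup₂_le fun i hi => hi

lemma conjAct_conjAct (d k : ℕ) (U V : Fin k → MM d) (A : BM d k) :
    conjAct d k U (conjAct d k V A) = conjAct d k (fun j => U j * V j) A := by
  simp only [conjAct, ← tensorK_mul, Matrix.conjTranspose_mul, mul_assoc]

lemma orbitSpan_inv (d k : ℕ) (x : BM d k) (U : Fin k → Matrix.unitaryGroup (Fin d) ℂ)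
    (A : BM d k) (hA : A ∈ orbitSpan d k x) :
    conjAct d k (fun j => (U j : MM d)) A ∈ orbitSpan d k x := by
  let L : BM d k →ₗ[ℝ] BM d k :=
    { toFun := conjAct d k (fun j => (U j : MM d))
      map_add' := by intro x y; simp [conjAct, mul_add, add_mul]
      map_smul' := by intro r x; simp [conjAct] }
  have : orbitSpan d k x ≤ (orbitSpan d k x).comap L := by
    apply Submodule.span_le.mpr
    rintro _ ⟨V, rfl⟩
    apply Submodule.subset_span
    refine ⟨fun j => U j * V j, ?_⟩
    exact conjAct_conjAct d k _ _ x
  exact this hA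

lemma mem_orbitSpan (d k : ℕ) (x : BM d k) : x ∈ orbitSpan d k x := by
  apply Submodule.subset_span
  refine ⟨fun _ => 1, ?_⟩
  have : tensorK d k (fun _ => (1 : MM d)) = 1 := by
    ext p q
    by_cases h : p = q
    · subst h; simp [tensorK]
    · obtain ⟨j, hj⟩ := Function.ne_iff.mp h
      simp only [tensorK, Matrix.of_apply, Matrix.one_apply_ne h]
      exact Finset.prod_eq_zero (Finset.mem_univ j) (Matrix.one_apply_ne hj)
  simp [conjAct, this]

lemma orbitSpan_le (d k : ℕ) (x : BM d k) (F : Submodule ℝ (BM d k)) (hx : x ∈ F)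
    (hinv : ∀ (U : Fin k → Matrix.unitaryGroup (Fin d) ℂ), ∀ A ∈ F,
      conjAct d k (fun j => (U j : MM d)) A ∈ F) : orbitSpan d k x ≤ F := by
  apply Submodule.span_le.mpr
  rintro _ ⟨U, rfl⟩
  exact hinv U x hx

lemma exists_elem_le (d k : ℕ) (hd : 1 < d) (E : Submodule ℝ (BM d k)) (hE : E ≤ hermSub d k)
    (h0 : E ≠ ⊥)
    (hinv : ∀ (U : Fin k → Matrix.unitaryGroup (Fin d) ℂ), ∀ A ∈ E,
      conjAct d k (fun j => (U j : MM d)) A ∈ E) : ∃ i, elemSub d k i ≤ E := by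
  by_contra hno
  push Not at hno
  apply h0
  rw [invariant_eq d k hd E hE hinv]
  simp [hno]

/-- **Irreducible and invariant subspaces for the isometry group of `S`**
(Aubrun–Szarek–Ye, Lemma 10).  For the action of `U(d)^k` on `H^{⊗k}` by simultaneous
conjugation, a subspace `E ⊂ H^{⊗k}` is irreducible iff it is one of the `2^k`
elementary subspaces `H_{i₁} ⊗ ⋯ ⊗ H_{i_k}`, and invariant iff it is a (nontrivial)
direct sum of elementary subspaces. -/
theorem irreducible_invariant_subspaces (d k : ℕ) (hd : 1 < d) (hk : 1 ≤ k)
    (E : Submodule ℝ (Matrix (Fin k → Fin d) (Fin k → Fin d) ℂ))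
    (hE : E ≤ hermSub d k) :
    (IsIrreducibleSub d k E ↔ ∃ i : Fin k → Bool, E = elemSub d k i) ∧
    (IsInvariantSub d k E ↔
      ∃ S : Set (Fin k → Bool), S.Nonempty ∧ E = ⨆ i ∈ S, elemSub d k i) := by
  have hinvS : ∀ S : Set (Fin k → Bool), ∀ (U : Fin k → Matrix.unitaryGroup (Fin d) ℂ),
      ∀ A ∈ ⨆ i ∈ S, elemSub d k i,
      conjAct d k (fun j => (U j : Matrix (Fin d) (Fin d) ℂ)) A ∈ ⨆ i ∈ S, elemSub d k i := by
    intro S U A hA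
    let L : BM d k →ₗ[ℝ] BM d k :=
      { toFun := conjAct d k (fun j => (U j : MM d))
        map_add' := by intro x y; simp [conjAct, mul_add, add_mul]
        map_smul' := by intro r x; simp [conjAct] }
    have : (⨆ i ∈ S, elemSub d k i) ≤ (⨆ i ∈ S, elemSub d k i).comap L := by
      refine iSup₂_le fun i hi x hx => ?_
      have h2 : elemSub d k i ≤ ⨆ i ∈ S, elemSub d k i := le_iSup₂_of_le i hi le_rfl
      exact h2 (conjAct_elem d k i U x hx)
    exact this hA
  refine ⟨⟨?_, ?_⟩, ⟨?_, ?_⟩⟩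
  · rintro ⟨h0, h⟩
    obtain ⟨A, hA, hA0⟩ := (Submodule.ne_bot_iff E).mp h0
    have hinv : ∀ (U : Fin k → Matrix.unitaryGroup (Fin d) ℂ), ∀ A ∈ E,
      conjAct d k (fun j => (U j : MM d)) A ∈ E := by
      rw [h A hA hA0]
      exact orbitSpan_inv d k A
    obtain ⟨i, hi⟩ := exists_elem_le d k hd E hE h0 hinv
    refine ⟨i, le_antisymm ?_ hi⟩
    rw [h _ (hi (std_mem d k hd i)) (std_ne d k hd i)]
    exact orbitSpan_le d k _ _ (std_mem d k hd i) (conjAct_elem d k i)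
  · rintro ⟨i, rfl⟩
    refine ⟨elemSub_ne_bot d k hd i, fun A hA hA0 => ?_⟩
    have hle := orbitSpan_le d k A _ hA (conjAct_elem d k i)
    obtain ⟨i', hi'⟩ := exists_elem_le d k hd (orbitSpan d k A) (hle.trans hE)
      ((Submodule.ne_bot_iff _).mpr ⟨A, mem_orbitSpan d k A, hA0⟩) (orbitSpan_inv d k A)
    have := elemSub_inj d k hd i i' (hi'.trans hle)
    subst this
    exact le_antisymm hi' hle
  · rintro ⟨h0, hinv⟩
    exact ⟨_, exists_elem_le d k hd E hE h0 hinv, invariant_eq d k hd E hE hinv⟩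
  · rintro ⟨S, ⟨i, hi⟩, rfl⟩
    refine ⟨fun h => ?_, hinvS S⟩
    apply elemSub_ne_bot d k hd i
    rw [eq_bot_iff, ← h]
    exact le_iSup₂_of_le i hi le_rfl

end
end
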